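/- Let r ≥ 1, a ≥ 1, 1 ≤ b ≤ r, and k ≥ 1 be integers with k ≥ r − b + a, and let d_1 ≤ ⋯ ≤ d_k be positive integers. Then the codimension of Φ^{ℙ^r,a}_{d_1,…,d_k}(ℙ^r, Span(r,b)) \ (Φ^{ℙ^r,a}_{d_1,…,d_{k−1}}(ℙ^r) × W_{r,d_k}) in W_{r,d_1}×⋯×W_{r,d_k} is at least −(b+1)(r−b) + min{ Σ_{j=1}^{r−b+a} h_{b, b−i_j+j}(d_{i_j}) : 1 ≤ i_1 < ⋯ < i_{r−b+a} = k }, where (b+1)(r−b) is the dimension of the Grassmannian 𝔾(b,r) of b-planes in ℙ^r. -/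

import Mathlib

open MvPolynomial

noncomputable section

variable (K : Type*) [Field K] (M : Type*) [AddCommGroup M] [Module K M]

/-- Evaluation of a polynomial in the linear functionals of `M` at a point `v : M`.
These are precisely the polynomial functions on the affine space `M`. -/
def polyEval (p : MvPolynomial (M →ₗ[K] K) K) (v : M) : K :=
  MvPolynomial.eval (fun φ : M →ₗ[K] K => φ v) p

lemma polyEval_mul (p q : MvPolynomial (M →ₗ[K] K) K) (v : M) :
    polyEval K M (p * q) v = polyEval K M p v * polyEval K M q v :=
  map_mul (MvPolynomial.eval fun φ : M →ₗ[K] K => φ v) p q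

/-- The collection of Zariski-closed subsets of the affine space `M`:
common zero loci of families of polynomial functions. -/
def zariskiCloseds : Set (Set M) :=
  {s | ∃ S : Set (MvPolynomial (M →ₗ[K] K) K), s = {v | ∀ p ∈ S, polyEval K M p v = 0}}

/-- The Zariski topology on an affine space (vector space) `M` over `K`. -/
def zariskiTopology : TopologicalSpace M := by
  refine TopologicalSpace.ofClosed (zariskiCloseds K M) ⟨{1}, ?_⟩ ?_ ?_
  · ext v
    simp [polyEval]
  · intro A hA
    choose S hS using fun a : A => hA a.2
    refine ⟨⋃ a : A, S a, ?_⟩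
    ext v
    simp only [Set.mem_sInter, Set.mem_setOf_eq, Set.mem_iUnion]
    constructor
    · rintro h p ⟨a, hp⟩
      have := h a a.2
      rw [hS a] at this
      exact this p hp
    · intro h t ht
      have : v ∈ {w | ∀ p ∈ S ⟨t, ht⟩, polyEval K M p w = 0} :=
        fun p hp => h p ⟨⟨t, ht⟩, hp⟩
      rw [← hS ⟨t, ht⟩] at this
      exact this
  · rintro s ⟨S₁, rfl⟩ t ⟨S₂, rfl⟩
    refine ⟨Set.image2 (· * ·) S₁ S₂, ?_⟩
    ext v
    simp only [Set.mem_union, Set.mem_setOf_eq]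
    constructor
    · rintro (h | h) p ⟨p₁, h₁, p₂, h₂, rfl⟩
      · show polyEval K M (p₁ * p₂) v = 0
        rw [polyEval_mul, h p₁ h₁, zero_mul]
      · show polyEval K M (p₁ * p₂) v = 0
        rw [polyEval_mul, h p₂ h₂, mul_zero]
    · intro h
      by_contra hc
      push_neg at hc
      obtain ⟨⟨p₁, h₁, hv₁⟩, ⟨p₂, h₂, hv₂⟩⟩ := hc
      have h12 := h (p₁ * p₂) ⟨p₁, h₁, p₂, h₂, rfl⟩
      rw [polyEval_mul] at h12
      exact mul_ne_zero hv₁ hv₂ h12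

/-- The dimension of a subset of affine space: the Krull dimension of its Zariski closure. -/
def dimSet {M : Type*} [TopologicalSpace M] (s : Set M) : WithBot ℕ∞ :=
  topologicalKrullDim ↥(closure s)

/-- `vdimGE r n F m` says that the common projective vanishing locus
`V(F 0, …, F (n-1)) ⊆ ℙ^r` has dimension at least `m` (with `dim ∅ = -∞`).
This is encoded via the Krull dimension of the homogeneous coordinate ring of the
affine cone: `dim V(F) ≥ m` iff the cone has Krull dimension at least `max m 0 + 1`. -/
def vdimGE {K : Type*} [Field K] (r n : ℕ) (F : Fin n → MvPolynomial (Fin (r + 1)) K)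
    (m : ℤ) : Prop :=
  ((m.toNat + 1 : ℕ) : WithBot ℕ∞) ≤
    ringKrullDim (MvPolynomial (Fin (r + 1)) K ⧸ Ideal.span (Set.range F))

end

noncomputable section Statement3

open MvPolynomial

variable (K : Type*) [Field K]

/-- The affine space `W_{r, d 0} × ⋯ × W_{r, d (n-1)}` of `n`-tuples of homogeneous
forms of degrees `d 0, …, d (n-1)` in the variables `x_0, …, x_r`. -/
abbrev tupleSpace (r n : ℕ) (d : Fin n → ℕ) : Type _ :=
  (i : Fin n) → ↥(homogeneousSubmodule (Fin (r + 1)) K (d i))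

/-- The Zariski topology on the affine space of tuples of forms. -/
instance (r n : ℕ) (d : Fin n → ℕ) : TopologicalSpace (tupleSpace K r n d) :=
  zariskiTopology K _

/-- The function `h_{r,a}(d) = (r-a) * C(d+a-1, d-1) + C(d+a, d)`, as a function of
integer arguments. -/
def hpoly (r a d : ℤ) : ℤ :=
  (r - a) * ((d + a - 1).toNat.choose (d - 1).toNat : ℤ) + ((d + a).toNat.choose d.toNat : ℤ)

/-- An ideal of the polynomial ring is homogeneous iff it contains all the homogeneous
components of each of its elements. -/
def IsHomogeneousIdeal {r : ℕ} (p : Ideal (MvPolynomial (Fin (r + 1)) K)) : Prop :=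
  ∀ f ∈ p, ∀ i : ℕ, MvPolynomial.homogeneousComponent i f ∈ p

/-- The tuple `F` lies in `Φ^{ℙ^r,a}_{d_1,…,d_k}(ℙ^r, Span(r,b))`: the common vanishing locus
`V(F_1, …, F_k) ⊆ ℙ^r` contains an integral closed subscheme of dimension `r - k + a` whose
linear span is exactly a `b`-dimensional linear subspace of `ℙ^r`. The integral closed
subscheme is encoded by its homogeneous prime ideal `p`; its dimension is `n` where the
affine cone `R ⧸ p` has Krull dimension `n + 1`; and its span is the projectivization of
the `(b+1)`-dimensional linear subspace `Λ ⊆ K^{r+1}`, i.e. the degree-one forms in `p` are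
exactly the linear forms vanishing on `Λ`. -/
def memPhiSpan {r n : ℕ} {d : Fin n → ℕ} (a b : ℕ) (F : tupleSpace K r n d) : Prop :=
  ∃ p : Ideal (MvPolynomial (Fin (r + 1)) K), p.IsPrime ∧ IsHomogeneousIdeal K p ∧
    Ideal.span (Set.range fun i => (F i : MvPolynomial (Fin (r + 1)) K)) ≤ p ∧
    (∃ m : ℕ, (m : ℤ) = (r : ℤ) - n + a ∧
      ringKrullDim (MvPolynomial (Fin (r + 1)) K ⧸ p) = ((m + 1 : ℕ) : WithBot ℕ∞)) ∧
    ∃ Λ : Submodule K (Fin (r + 1) → K), Module.finrank K Λ = b + 1 ∧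
      ∀ f : MvPolynomial (Fin (r + 1)) K, f.IsHomogeneous 1 →
        (f ∈ p ↔ ∀ v ∈ Λ, MvPolynomial.eval v f = 0)

/-- Extended coercion of dimensions in `WithBot ℕ∞ = ℕ ∪ {±∞}` into `WithBot (WithTop ℤ)
 = ℤ ∪ {±∞}`, used to compare dimensions with possibly negative integer bounds. -/
def toZDim : WithBot ℕ∞ → WithBot (WithTop ℤ) :=
  WithBot.map (WithTop.map (Nat.cast : ℕ → ℤ))

end Statement3

/-!
A chain of irreducible closed subsets of the closure of the locus `X` is a chain of prime ideals of
the ring of polynomial functions containing the ideal of `X`. Its smallest member `q` is the trace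
of an ultrafilter on `X`: in the corresponding ultrapower `Ω` of `K` the diagonal tuple of forms
`F` is a point of `X` at which only polynomials in `q` vanish. Hence the length of the chain is at
most the size of any finite `T ⊆ Ω` over which the coefficients of `F` are algebraic. The
ultraproduct `P` of the primes witnessing membership in `X` is again a prime containing `F`, of
the same dimension and with a linear span of the same dimension.

The set `T` is found by adding the forms one at a time, starting from the span of `P`, which costs
`(r - b)(b + 1)` parameters. If the next form does not contain the variety of dimension `n` reached
so far, its `C(r + d, d)` coefficients are added, and the dimension drops. Otherwise the form lies
in the prime `Q` of that variety and is determined by as many parameters as there are forms of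
degree `d` in `Q`; this saves the Hilbert function of `Q` at `d`, which is at least `h_{b,n}(d)` as
`Q` contains no linear form other than those vanishing on the span. By the choice of `X` the last
form is of the second kind.

For the lower bound on the Hilbert function, the homogeneous coordinate ring embeds into a field
with a valuation for which elements with distinct values are linearly independent. The linear forms
take at least `b + 1` values, among them `n + 1` linearly independent ones, the `d`-fold sums of
these values are values of forms of degree `d`, and a Freiman-type inequality bounds the number of
these sums from below.
-/

section MinHilbert

/-- The smallest possible number of linearly independent forms of degree `d` on a nondegenerate
integral variety of dimension `n` in `ℙ^N`, attained by varieties of minimal degree. It agrees with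
`hpoly N n d` for `n ≤ N` and `1 ≤ d`; see `hpoly_eq_minHilbert`. -/
def minHilbert (N n : ℕ) : ℕ → ℕ
  | 0 => 1
  | d + 1 => (d + 1 + n).choose n + (N - n) * (d + n).choose n

lemma minHilbert_mono_left {M N : ℕ} (h : M ≤ N) (n d : ℕ) :
    minHilbert M n d ≤ minHilbert N n d := by
  cases d
  · exact le_rfl
  · simp only [minHilbert]
    gcongr

lemma minHilbert_zero_left (n d : ℕ) : minHilbert 0 n d = (d + n).choose n := by
  cases d <;> simp [minHilbert]

lemma minHilbert_succ_left_le (N n d : ℕ) :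
    minHilbert (N + 1) n (d + 1) ≤ minHilbert N n (d + 1) + (d + n).choose n := by
  have h : N + 1 - n ≤ N - n + 1 := by omega
  calc minHilbert (N + 1) n (d + 1)
      ≤ (d + 1 + n).choose n + (N - n + 1) * (d + n).choose n := by
        simp only [minHilbert]
        gcongr
    _ = minHilbert N n (d + 1) + (d + n).choose n := by
        simp only [minHilbert]
        ring

lemma sum_range_minHilbert (N n d : ℕ) :
    ∑ e ∈ Finset.range (d + 1), minHilbert N n e = minHilbert (N + 1) (n + 1) d := by
  have pascal (e : ℕ) :
      (e + 1 + (n + 1)).choose (n + 1) = (e + 1 + n).choose n + (e + (n + 1)).choose (n + 1) := by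
    rw [← add_assoc, Nat.choose_succ_succ, add_right_comm e 1 n, add_assoc e n 1]
  induction d with
  | zero => simp [minHilbert]
  | succ d ih =>
    rw [Finset.sum_range_succ, ih]
    cases d with
    | zero =>
      simp only [minHilbert, Nat.add_sub_add_right, pascal]
      simp
      ring
    | succ d =>
      simp only [minHilbert, Nat.add_sub_add_right, pascal]
      ring

end MinHilbert

section Sumset

open Pointwise Finset

variable {E : Type*} [AddCommGroup E]

lemma nsmul_le_of_mem_nsmul [DecidableEq E] {Γ F : Type*} [AddCommMonoid Γ] [PartialOrder Γ]
    [IsOrderedAddMonoid Γ] [FunLike F E Γ] [AddMonoidHomClass F E Γ] (l : F) {A : Finset E} {c : Γ}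
    (hl : ∀ x ∈ A, c ≤ l x) {d : ℕ} {x : E} (hx : x ∈ d • A) : d • c ≤ l x := by
  induction d generalizing x with
  | zero => simp_all
  | succ d ih =>
    rw [succ_nsmul] at hx
    obtain ⟨y, hy, z, hz, rfl⟩ := mem_add.mp hx
    rw [succ_nsmul, map_add]
    exact add_le_add (ih hy) (hl z hz)

variable [Module ℚ E]

/-- If the constraints tight at `l` do not span, then `l` can be moved along a direction on which
they are constant until one more constraint becomes tight. -/
lemma exists_dual_card_tight_lt {B : Finset E} {l : E →ₗ[ℚ] ℚ} (hl : ∀ x ∈ B, 1 ≤ l x) {x₀ : E}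
    (hx₀ : x₀ ∈ B) (hspan : x₀ ∉ Submodule.span ℚ {y : E | y ∈ B ∧ l y = 1}) :
    ∃ l' : E →ₗ[ℚ] ℚ, (∀ x ∈ B, 1 ≤ l' x) ∧ #{y ∈ B | l y = 1} < #{y ∈ B | l' y = 1} := by
  obtain ⟨m, hm, htight⟩ : ∃ m : E →ₗ[ℚ] ℚ, m x₀ < 0 ∧ ∀ y ∈ B, l y = 1 → m y = 0 := by
    obtain ⟨m, hm, hker⟩ := Submodule.exists_le_ker_of_notMem hspan
    have htight : ∀ y ∈ B, l y = 1 → m y = 0 := fun y hy h =>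
      hker (Submodule.subset_span ⟨hy, h⟩)
    rcases lt_or_gt_of_ne hm with h | h
    · exact ⟨m, h, htight⟩
    · exact ⟨-m, by simpa using h, fun y hy h1 => by simp [htight y hy h1]⟩
  obtain ⟨z, hz, hzmin⟩ := exists_min_image {y ∈ B | m y < 0} (fun y => (l y - 1) / -m y)
    ⟨x₀, by simp [hx₀, hm]⟩
  obtain ⟨hzB, hmz⟩ := mem_filter.mp hz
  set t := (l z - 1) / -m z with ht
  have ht0 : 0 ≤ t := div_nonneg (sub_nonneg.mpr (hl z hzB)) (by linarith)
  have happly (x : E) : (l + t • m) x = l x + t * m x := rfl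
  refine ⟨l + t • m, fun x hx => ?_, card_lt_card ?_⟩
  · rw [happly]
    rcases lt_or_ge (m x) 0 with h | h
    · have hxt : t ≤ (l x - 1) / -m x := hzmin x (mem_filter.mpr ⟨hx, h⟩)
      rw [le_div_iff₀ (by linarith)] at hxt
      linarith
    · nlinarith [hl x hx, mul_nonneg ht0 h]
  · rw [ssubset_iff_of_subset fun y hy => ?_]
    · refine ⟨z, mem_filter.mpr ⟨hzB, ?_⟩, fun hz => hmz.ne (htight z hzB (mem_filter.mp hz).2)⟩
      have := hmz.ne
      rw [happly, ht]
      field_simp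
      ring
    · obtain ⟨hyB, hy1⟩ := mem_filter.mp hy
      simp [hyB, hy1, htight y hyB hy1]

lemma exists_dual_one_le_and_tight_span {B : Finset E}
    (hB : ∃ l : E →ₗ[ℚ] ℚ, ∀ x ∈ B, 1 ≤ l x) :
    ∃ l : E →ₗ[ℚ] ℚ, (∀ x ∈ B, 1 ≤ l x) ∧
      ∀ x ∈ B, x ∈ Submodule.span ℚ {y : E | y ∈ B ∧ l y = 1} := by
  obtain ⟨l₀, hl₀⟩ := hB
  by_contra! hcon
  have hmany (n : ℕ) : ∃ l : E →ₗ[ℚ] ℚ, (∀ x ∈ B, 1 ≤ l x) ∧ n ≤ #{y ∈ B | l y = 1} := by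
    induction n with
    | zero => exact ⟨l₀, hl₀, Nat.zero_le _⟩
    | succ n ih =>
      obtain ⟨l, hl, hn⟩ := ih
      obtain ⟨x₀, hx₀, hspan⟩ := hcon l hl
      obtain ⟨l', hl', hlt⟩ := exists_dual_card_tight_lt hl hx₀ hspan
      exact ⟨l', hl', hn.trans_lt hlt⟩
  obtain ⟨l, -, hl⟩ := hmany (#B + 1)
  exact absurd (card_filter_le B fun y => l y = 1) (by omega)

lemma exists_dual_eq_on_and_ne {s : Set E} {a b : E} (hb : b ∈ s) (ha : a ∉ affineSpan ℚ s) :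
    ∃ f : E →ₗ[ℚ] ℚ, (∀ x ∈ s, f x = f b) ∧ f a ≠ f b := by
  have hab : a - b ∉ vectorSpan ℚ s := fun h => ha <| by
    rw [← sub_add_cancel a b]
    exact AffineSubspace.vadd_mem_of_mem_direction (by rwa [direction_affineSpan])
      (mem_affineSpan ℚ hb)
  obtain ⟨f, hf, hker⟩ := Submodule.exists_le_ker_of_notMem hab
  refine ⟨f, fun x hx => sub_eq_zero.mp ?_, fun h => hf (by rw [map_sub, h, sub_self])⟩
  rw [← map_sub]
  exact hker (vsub_mem_vectorSpan ℚ hx hb)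

variable [DecidableEq E]

lemma exists_mem_dual_one_le_sub {A : Finset E} (hA : A.Nonempty) :
    ∃ a ∈ A, ∃ l : E →ₗ[ℚ] ℚ, ∀ x ∈ A.erase a, 1 ≤ l (x - a) := by
  obtain ⟨ψ, hψ⟩ := Module.exists_dual_forall_apply_ne_zero (K := ℚ) (M := E)
    (ι := {p : A × A // p.1 ≠ p.2}) (fun p => (p.1.1 : E) - p.1.2)
    (fun p => sub_ne_zero.mpr fun h => p.2 (Subtype.ext h))
  obtain ⟨a, ha, hamin⟩ := exists_min_image A ψ hA
  have hpos : ∀ x ∈ A.erase a, 0 < ψ (x - a) := by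
    intro x hx
    obtain ⟨hxa, hxA⟩ := mem_erase.mp hx
    have hne : ψ (x - a) ≠ 0 := hψ ⟨(⟨x, hxA⟩, ⟨a, ha⟩), by simpa using hxa⟩
    exact lt_of_le_of_ne (by simpa using hamin x hxA) hne.symm
  rcases (A.erase a).eq_empty_or_nonempty with hempty | hne
  · exact ⟨a, ha, 0, by simp [hempty]⟩
  obtain ⟨y, hy, hymin⟩ := exists_min_image (A.erase a) (fun x => ψ (x - a)) hne
  refine ⟨a, ha, (ψ (y - a))⁻¹ • ψ, fun x hx => ?_⟩
  rw [LinearMap.smul_apply, smul_eq_mul, inv_mul_eq_div, one_le_div (hpos y hy)]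
  exact hymin x hx

lemma exists_mem_dual_vectorSpan_le {A : Finset E} (hA : A.Nonempty) :
    ∃ a ∈ A, ∃ l : E →ₗ[ℚ] ℚ, (∀ x ∈ A.erase a, l a + 1 ≤ l x) ∧
      vectorSpan ℚ (A : Set E) ≤ vectorSpan ℚ {x : E | x ∈ A ∧ l x ≤ l a + 1} := by
  obtain ⟨a, ha, l₀, hl₀⟩ := exists_mem_dual_one_le_sub hA
  obtain ⟨l, hl, hspan⟩ := exists_dual_one_le_and_tight_span (B := (A.erase a).image (· - a))
    ⟨l₀, by simpa only [forall_mem_image] using hl₀⟩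
  rw [forall_mem_image] at hl hspan
  refine ⟨a, ha, l, fun x hx => by linarith [hl hx, map_sub l x a], ?_⟩
  rw [vectorSpan_eq_span_vsub_set_right ℚ (mem_coe.mpr ha), Submodule.span_le]
  rintro _ ⟨x, hx, rfl⟩
  by_cases hxa : x = a
  · simp [hxa]
  refine Submodule.span_le.mpr ?_ (hspan (mem_erase.mpr ⟨hxa, hx⟩))
  rintro _ ⟨hmem, hy1⟩
  obtain ⟨y, hy, rfl⟩ := mem_image.mp hmem
  rw [map_sub] at hy1
  exact vsub_mem_vectorSpan ℚ ⟨mem_of_mem_erase hy, by linarith⟩ ⟨ha, by linarith⟩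

/-- The first summand lives where `l` is at least `(d + 1) (l a + 1)`, the second one where it is
strictly smaller. -/
lemma card_nsmul_erase_add_card_nsmul_filter_le {A : Finset E} {a : E} (ha : a ∈ A)
    {l : E →ₗ[ℚ] ℚ} (hl : ∀ x ∈ A.erase a, l a + 1 ≤ l x) (d : ℕ) :
    #((d + 1) • A.erase a) + #(d • {x ∈ A | l x ≤ l a + 1}) ≤ #((d + 1) • A) := by
  set C : Finset E := {x ∈ A | l x ≤ l a + 1}
  have hdisj : Disjoint ((d + 1) • A.erase a) ({a} + d • C) := by
    rw [disjoint_left]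
    intro x hx hx'
    rw [singleton_add, mem_vadd_finset] at hx'
    obtain ⟨z, hz, rfl⟩ := hx'
    have hlower := nsmul_le_of_mem_nsmul l hl hx
    have hupper := nsmul_le_of_mem_nsmul (-l) (c := -(l a + 1))
      (fun x hx => neg_le_neg (mem_filter.mp hx).2) hz
    simp only [vadd_eq_add, map_add, LinearMap.neg_apply, nsmul_eq_mul] at hlower hupper
    push_cast at hlower
    linarith
  have hsub : (d + 1) • A.erase a ∪ ({a} + d • C) ⊆ (d + 1) • A := by
    refine union_subset (nsmul_subset_nsmul_left (erase_subset a A)) ?_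
    rw [succ_nsmul']
    exact add_subset_add (singleton_subset_iff.mpr ha)
      (nsmul_subset_nsmul_left (filter_subset _ A))
  simpa only [card_union_of_disjoint hdisj, card_singleton_add] using card_le_card hsub

lemma sum_card_nsmul_le_card_nsmul_insert {A : Finset E} (hA : A.Nonempty) {a : E}
    (ha : a ∉ affineSpan ℚ (A : Set E)) (d : ℕ) :
    ∑ e ∈ range (d + 1), #(e • A) ≤ #(d • insert a A) := by
  obtain ⟨b, hb⟩ := hA
  obtain ⟨f, hfA, hfa⟩ := exists_dual_eq_on_and_ne (mem_coe.mpr hb) ha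
  have hf {e : ℕ} {x : E} (hx : x ∈ e • A) : f x = e * f b := by
    have hlower := nsmul_le_of_mem_nsmul f (fun x hx => (hfA x hx).ge) hx
    have hupper := nsmul_le_of_mem_nsmul (-f) (fun x hx => neg_le_neg (hfA x hx).le) hx
    simp only [LinearMap.neg_apply, nsmul_eq_mul] at hlower hupper
    linarith
  have hsub : (range (d + 1)).biUnion (fun e => {(d - e) • a} + e • A) ⊆ d • insert a A := by
    refine biUnion_subset.mpr fun e he => ?_
    rw [← Nat.sub_add_cancel (mem_range_succ_iff.mp he), add_nsmul, Nat.add_sub_cancel]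
    exact add_subset_add (singleton_subset_iff.mpr (nsmul_mem_nsmul (mem_insert_self a A)))
      (nsmul_subset_nsmul_left (subset_insert a A))
  refine le_trans (le_of_eq ?_) (card_le_card hsub)
  rw [card_biUnion]
  · simp only [card_singleton_add]
  intro e he e' he' hne
  rw [Function.onFun, disjoint_left]
  simp only [singleton_add, mem_vadd_finset, vadd_eq_add]
  rintro _ ⟨z, hz, rfl⟩ ⟨z', hz', heq⟩
  replace heq := congrArg f heq
  rw [map_add, map_add, hf hz, hf hz', map_nsmul, map_nsmul, nsmul_eq_mul, nsmul_eq_mul,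
    Nat.cast_sub (mem_range_succ_iff.mp he), Nat.cast_sub (mem_range_succ_iff.mp he')] at heq
  have hprod : ((e : ℚ) - e') * (f a - f b) = 0 := by linear_combination heq
  rcases mul_eq_zero.mp hprod with h | h
  · exact hne (by exact_mod_cast sub_eq_zero.mp h)
  · exact hfa (sub_eq_zero.mp h)

lemma minHilbert_le_card_nsmul_insert {A : Finset E} (hA : A.Nonempty) {a : E}
    (ha : a ∉ affineSpan ℚ (A : Set E)) {N n d : ℕ} (h : ∀ e ≤ d, minHilbert N n e ≤ #(e • A)) :
    minHilbert (N + 1) (n + 1) d ≤ #(d • insert a A) :=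
  calc minHilbert (N + 1) (n + 1) d
      = ∑ e ∈ range (d + 1), minHilbert N n e := (sum_range_minHilbert N n d).symm
    _ ≤ ∑ e ∈ range (d + 1), #(e • A) :=
        sum_le_sum fun e he => h e (mem_range_succ_iff.mp he)
    _ ≤ #(d • insert a A) := sum_card_nsmul_le_card_nsmul_insert hA ha d

/-- Peel off a vertex `a` of the convex hull of `A`: if removing it does not lower the dimension,
the points seen from `a` at minimal height give enough new sums; otherwise `A` is a cone with
apex `a`, whose sums are graded by the multiplicity of `a`. -/
theorem minHilbert_le_card_nsmul {N n d : ℕ} {A : Finset E} (hA : #A = N + 1)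
    (hn : n ≤ Module.finrank ℚ (vectorSpan ℚ (A : Set E))) : minHilbert N n d ≤ #(d • A) := by
  induction hs : N + d using Nat.strong_induction_on generalizing N n d A with
  | _ s ih =>
  subst hs
  have hAne : A.Nonempty := card_pos.mp (by omega)
  rcases d with _ | d
  · simp [minHilbert]
  rcases N with _ | N
  · obtain ⟨a, rfl⟩ := card_eq_one.mp hA
    rw [coe_singleton, vectorSpan_singleton, finrank_bot, Nat.le_zero] at hn
    simp [hn, minHilbert]
  obtain ⟨a, ha, l, hl, hspan⟩ := exists_mem_dual_vectorSpan_le hAne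
  have hcard : #(A.erase a) = N + 1 := by rw [card_erase_of_mem ha]; omega
  by_cases hdim : n ≤ Module.finrank ℚ (vectorSpan ℚ (A.erase a : Set E))
  · set C : Finset E := {x ∈ A | l x ≤ l a + 1}
    have hC : 0 < #C := card_pos.mpr ⟨a, mem_filter.mpr ⟨ha, by linarith⟩⟩
    have hCA : #C ≤ #A := card_filter_le _ _
    have hnC : n ≤ Module.finrank ℚ (vectorSpan ℚ (C : Set E)) := by
      have := finiteDimensional_vectorSpan_of_finite ℚ C.finite_toSet
      exact hn.trans (Submodule.finrank_mono (by simpa [C] using hspan))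
    calc minHilbert (N + 1) n (d + 1)
        ≤ minHilbert N n (d + 1) + (d + n).choose n := minHilbert_succ_left_le N n d
      _ ≤ minHilbert N n (d + 1) + minHilbert (#C - 1) n d := by
          rw [← minHilbert_zero_left]
          exact Nat.add_le_add_left (minHilbert_mono_left (Nat.zero_le _) n d) _
      _ ≤ #((d + 1) • A.erase a) + #(d • C) :=
          add_le_add (ih _ (by omega) hcard hdim rfl)
            (ih (#C - 1 + d) (by omega) (by omega) hnC rfl)
      _ ≤ #((d + 1) • A) := card_nsmul_erase_add_card_nsmul_filter_le ha hl d
  · obtain ⟨n, rfl⟩ : ∃ m, n = m + 1 := ⟨n - 1, by omega⟩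
    have haff : a ∉ affineSpan ℚ (A.erase a : Set E) := fun h => hdim <| by
      rwa [← vectorSpan_insert_eq_vectorSpan h, ← coe_insert, insert_erase ha]
    have hn' : n ≤ Module.finrank ℚ (vectorSpan ℚ (A.erase a : Set E)) := by
      have := finrank_vectorSpan_insert_le_set ℚ (A.erase a : Set E) a
      rw [← coe_insert, insert_erase ha] at this
      omega
    have h := minHilbert_le_card_nsmul_insert (card_pos.mp (by omega)) haff (N := N) (n := n)
      (d := d + 1) fun e he => ih (N + e) (by omega) hcard hn' rfl
    rwa [insert_erase ha] at h

end Sumset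

section ResidueField

open Polynomial

lemma exists_hasExtension_valuationSubring {L E Γ₀ : Type*} [Field L] [Field E] [Algebra L E]
    [LinearOrderedCommGroupWithZero Γ₀] (v : Valuation L Γ₀) :
    ∃ W : ValuationSubring E, v.HasExtension W.valuation := by
  obtain ⟨W, hW, hloc⟩ := IsLocalRing.exists_factor_valuationRing
    ((algebraMap L E).comp v.valuationSubring.subtype)
  have mem_of_le_one {x : L} (hx : v x ≤ 1) : algebraMap L E x ∈ W := hW ⟨x, hx⟩
  refine ⟨W, ⟨Valuation.isEquiv_of_val_le_one fun x => ?_⟩⟩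
  rw [Valuation.comap_apply, W.valuation_le_one_iff]
  refine ⟨mem_of_le_one, fun hx => ?_⟩
  by_contra! hlt
  have hx0 : x ≠ 0 := by
    rintro rfl
    simp at hlt
  have hinv : v x⁻¹ < 1 := by
    rw [map_inv₀]
    exact inv_lt_one_of_one_lt₀ hlt
  have hunit : IsUnit (⟨x⁻¹, hinv.le⟩ : v.valuationSubring) := by
    refine hloc.map_nonunit _ (IsUnit.of_mul_eq_one ⟨algebraMap L E x, hx⟩ (Subtype.ext ?_))
    change algebraMap L E x⁻¹ * algebraMap L E x = 1
    rw [← map_mul, inv_mul_cancel₀ hx0, map_one]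
  obtain ⟨y, hy⟩ := hunit.exists_right_inv
  have hxy : (y : L) = x := (inv_mul_eq_one₀ hx0).mp (congrArg Subtype.val hy) |>.symm
  exact hlt.not_ge (hxy ▸ y.2)

/-- The valuation `v` has residue field `k`: every element of its valuation ring is congruent to a
constant from `k` modulo the maximal ideal. -/
def HasConstantResidues (k : Type*) {E Γ₀ : Type*} [Field k] [Field E] [Algebra k E]
    [LinearOrderedCommGroupWithZero Γ₀] (v : Valuation E Γ₀) : Prop :=
  ∀ u, v u ≤ 1 → ∃ c : k, v (u - algebraMap k E c) < 1

lemma exists_valuation_sub_lt_one_of_aeval {k E Γ₀ : Type*} [Field k] [IsAlgClosed k] [Field E]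
    [Algebra k E] [LinearOrderedCommGroupWithZero Γ₀] (v : Valuation E Γ₀) [v.IsTrivialOn k]
    {p : k[X]} (hp : p ≠ 0) {u : E} (hu : v (aeval u p) < 1) :
    ∃ c : k, v (u - algebraMap k E c) < 1 := by
  by_contra! hcon
  refine hu.not_ge ?_
  rw [(IsAlgClosed.splits p).eq_prod_roots, map_mul, Polynomial.aeval_C, map_mul,
    Valuation.IsTrivialOn.eq_one p.leadingCoeff (leadingCoeff_ne_zero.mpr hp), one_mul,
    map_multiset_prod, map_multiset_prod, Multiset.map_map, Multiset.map_map]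
  refine Multiset.one_le_prod fun x hx => ?_
  obtain ⟨c, -, rfl⟩ := Multiset.mem_map.mp hx
  simpa using hcon c

lemma exists_aeval_eq_zero_coeff_eq_one {L E Γ₀ : Type*} [Field L] [Field E] [Algebra L E]
    [LinearOrderedCommGroupWithZero Γ₀] (v : Valuation L Γ₀) {u : E} (hu : IsAlgebraic L u) :
    ∃ p : L[X], aeval u p = 0 ∧ (∀ i, v (p.coeff i) ≤ 1) ∧ ∃ i, p.coeff i = 1 := by
  obtain ⟨p, hp0, hp⟩ := hu
  obtain ⟨j, hj, hmax⟩ := p.support.exists_max_image (fun i => v (p.coeff i))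
    (support_nonempty.mpr hp0)
  have hj0 : p.coeff j ≠ 0 := mem_support_iff.mp hj
  refine ⟨Polynomial.C (p.coeff j)⁻¹ * p, by simp [hp], fun i => ?_, j, by simp [hj0]⟩
  rw [Polynomial.coeff_C_mul, map_mul, map_inv₀, ← div_eq_inv_mul]
  by_cases hi : p.coeff i = 0
  · simp [hi]
  · exact div_le_one_of_le₀ (hmax i (mem_support_iff.mpr hi)) zero_le

lemma isTrivialOn_of_hasExtension {k L E Γ₀ Γ₁ : Type*} [Field k] [Field L] [Field E] [Algebra k L]
    [Algebra k E] [Algebra L E] [IsScalarTower k L E] [LinearOrderedCommGroupWithZero Γ₀]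
    [LinearOrderedCommGroupWithZero Γ₁] (v : Valuation L Γ₀) [v.IsTrivialOn k] (w : Valuation E Γ₁)
    [v.HasExtension w] : w.IsTrivialOn k where
  eq_one c hc := by
    rw [IsScalarTower.algebraMap_apply k L E, Valuation.HasExtension.val_map_eq_one_iff v w]
    exact Valuation.IsTrivialOn.eq_one c hc

/-- Reducing the coefficients of an algebraic equation for `u` modulo the maximal ideal gives a
polynomial over `k` whose value at `u` lies in the maximal ideal; hence `u` is congruent to one of
its roots. -/
theorem HasConstantResidues.of_hasExtension {k L E Γ₀ Γ₁ : Type*} [Field k] [IsAlgClosed k]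
    [Field L] [Field E] [Algebra k L] [Algebra k E] [Algebra L E] [IsScalarTower k L E]
    [Algebra.IsAlgebraic L E] [LinearOrderedCommGroupWithZero Γ₀]
    [LinearOrderedCommGroupWithZero Γ₁] {v : Valuation L Γ₀} (w : Valuation E Γ₁)
    [v.HasExtension w] [w.IsTrivialOn k] (hv : HasConstantResidues k v) :
    HasConstantResidues k w := by
  intro u hu
  obtain ⟨p, hpu, hp, j, hj⟩ :=
    exists_aeval_eq_zero_coeff_eq_one v (Algebra.IsAlgebraic.isAlgebraic (R := L) u)
  choose c hc using fun i => hv (p.coeff i) (hp i)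
  have hcj : c j ≠ 0 := fun h => by simpa [h, hj] using hc j
  have hjd : j ≤ p.natDegree := le_natDegree_of_ne_zero (by simp [hj])
  set g : k[X] := ∑ i ∈ Finset.range (p.natDegree + 1), monomial i (c i)
  have hg0 : g ≠ 0 := fun h => hcj <| by
    simpa [g, Polynomial.coeff_monomial, Nat.lt_succ_iff.mpr hjd] using
      congrArg (Polynomial.coeff · j) h
  refine exists_valuation_sub_lt_one_of_aeval w hg0 ?_
  have hgu : aeval u g = -∑ i ∈ Finset.range (p.natDegree + 1),
      algebraMap L E (p.coeff i - algebraMap k L (c i)) * u ^ i := by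
    rw [aeval_eq_sum_range] at hpu
    simp only [Algebra.smul_def] at hpu
    simp only [g, map_sum, Polynomial.aeval_monomial, map_sub, sub_mul, Finset.sum_sub_distrib, hpu,
      zero_sub, neg_neg, ← IsScalarTower.algebraMap_apply]
  rw [hgu, Valuation.map_neg]
  refine Valuation.map_sum_lt _ one_ne_zero fun i _ => ?_
  rw [map_mul, map_pow]
  exact mul_lt_one_of_lt_of_le ((Valuation.HasExtension.val_map_lt_one_iff v w _).mpr (hc i))
    (pow_le_one' hu i)

end ResidueField

section HahnSeriesValuation

variable {Γ k : Type*} [AddCommGroup Γ] [LinearOrder Γ] [IsOrderedAddMonoid Γ] [Field k]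

variable (Γ k) in
/-- The order valuation on Hahn series, written multiplicatively. -/
noncomputable def hahnValuation : Valuation (HahnSeries Γ k) (Multiplicative (WithTop Γ)ᵒᵈ) :=
  AddValuation.toValuation (HahnSeries.addVal Γ k)

lemma hahnValuation_le_one_iff {x : HahnSeries Γ k} : hahnValuation Γ k x ≤ 1 ↔ 0 ≤ x.orderTop :=
  Iff.rfl

lemma hahnValuation_lt_one_iff {x : HahnSeries Γ k} : hahnValuation Γ k x < 1 ↔ 0 < x.orderTop :=
  Iff.rfl

lemma hahnValuation_eq_one_iff {x : HahnSeries Γ k} : hahnValuation Γ k x = 1 ↔ x.orderTop = 0 :=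
  Iff.rfl

instance isTrivialOn_hahnValuation : (hahnValuation Γ k).IsTrivialOn k where
  eq_one _ hc := hahnValuation_eq_one_iff.mpr (HahnSeries.orderTop_single hc)

lemma hasConstantResidues_hahnValuation : HasConstantResidues k (hahnValuation Γ k) := by
  intro x hx
  refine ⟨x.coeff 0, hahnValuation_lt_one_iff.mpr (lt_of_le_of_ne ?_ ?_)⟩
  · refine hahnValuation_le_one_iff.mp ((Valuation.map_sub _ _ _).trans (max_le hx ?_))
    exact hahnValuation_le_one_iff.mpr HahnSeries.orderTop_single_le
  · intro h
    refine HahnSeries.coeff_orderTop_ne h.symm ?_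
    simp [HahnSeries.algebraMap_apply]

end HahnSeriesValuation

section ValueSet

open Pointwise Finset

lemma minHilbert_le_card_nsmul_of_linearIndependent {G : Type*} [AddCommGroup G]
    [IsAddTorsionFree G] [DecidableEq G] {N n d : ℕ} {A : Finset G} (hA : N + 1 ≤ #A)
    {g : Fin (n + 1) → G} (hgA : ∀ i, g i ∈ A) (hg : LinearIndependent ℤ g) :
    minHilbert N n d ≤ #(d • A) := by
  classical
  let ι : G →+ DivisibleHull G := DivisibleHull.coeAddMonoidHom G
  have hι : Function.Injective ι := DivisibleHull.coe_injective
  have hcard (B : Finset G) : #(B.image ι) = #B := card_image_of_injective B hι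
  have hind : LinearIndependent ℚ (ι ∘ g) :=
    (LinearIndependent.iff_fractionRing ℤ ℚ).mp
      (hg.map' ι.toIntLinearMap (LinearMap.ker_eq_bot.mpr hι))
  have hdim : n ≤ Module.finrank ℚ (vectorSpan ℚ (A.image ι : Set (DivisibleHull G))) := by
    have := finiteDimensional_vectorSpan_of_finite ℚ (A.image ι).finite_toSet
    calc n = Module.finrank ℚ (vectorSpan ℚ (Set.range (ι ∘ g))) :=
          (hind.affineIndependent.finrank_vectorSpan (by simp)).symm
      _ ≤ _ := by
        refine Submodule.finrank_mono (vectorSpan_mono ℚ ?_)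
        rintro _ ⟨i, rfl⟩
        exact mem_coe.mpr (mem_image_of_mem ι (hgA i))
  calc minHilbert N n d ≤ minHilbert (#A - 1) n d := minHilbert_mono_left (by omega) n d
    _ ≤ #(d • A.image ι) := minHilbert_le_card_nsmul (by rw [hcard]; omega) hdim
    _ = #(d • A) := by rw [← image_nsmul, hcard]

variable {k E Γ₀ : Type*} [Field k] [Field E] [Algebra k E] [LinearOrderedCommGroupWithZero Γ₀]
  (v : Valuation E Γ₀)

lemma linearIndependent_of_injective_valuation [v.IsTrivialOn k] {ι : Type*} {x : ι → E}
    (hx : ∀ i, x i ≠ 0) (hinj : Function.Injective (v ∘ x)) : LinearIndependent k x := by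
  classical
  have hsmul {c : k} (hc : c ≠ 0) (y : E) : v (c • y) = v y := by
    rw [Algebra.smul_def, map_mul, Valuation.IsTrivialOn.eq_one c hc, one_mul]
  rw [linearIndependent_iff']
  intro s g hs
  by_contra! hcon
  obtain ⟨j, hjs, hj⟩ := hcon
  obtain ⟨i, hi, hmax⟩ := exists_max_image {i ∈ s | g i ≠ 0} (v ∘ x) ⟨j, by simp [hjs, hj]⟩
  obtain ⟨his, hgi⟩ := mem_filter.mp hi
  have hlt : v (∑ j ∈ s.erase i, g j • x j) < v (x i) := by
    refine v.map_sum_lt (by simpa using hx i) fun j hj => ?_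
    obtain ⟨hji, hjs⟩ := mem_erase.mp hj
    by_cases hgj : g j = 0
    · simpa [hgj, zero_lt_iff] using hx i
    · rw [hsmul hgj]
      exact lt_of_le_of_ne (hmax j (by simp [hjs, hgj])) fun h => hji (hinj h)
  rw [← add_sum_erase _ _ his, add_eq_zero_iff_neg_eq] at hs
  rw [← hs, Valuation.map_neg, hsmul hgi] at hlt
  exact lt_irrefl _ hlt

/-- The values taken by `v` on the nonzero elements of the subspace `V`. The value group is written
additively, as in the sumset estimates. -/
def valueSet (V : Submodule k E) : Set (Additive Γ₀ˣ) :=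
  {γ | ∃ x ∈ V, v x = γ.toMul}

variable {v}

lemma zero_mem_valueSet {V : Submodule k E} (h : 1 ∈ V) : 0 ∈ valueSet v V :=
  ⟨1, h, by simp⟩

lemma add_mem_valueSet {U V W : Submodule k E} (h : ∀ x ∈ U, ∀ y ∈ V, x * y ∈ W)
    {γ δ : Additive Γ₀ˣ} (hγ : γ ∈ valueSet v U) (hδ : δ ∈ valueSet v V) :
    γ + δ ∈ valueSet v W := by
  obtain ⟨x, hx, hxγ⟩ := hγ
  obtain ⟨y, hy, hyδ⟩ := hδ
  exact ⟨x * y, h x hx y hy, by simp [hxγ, hyδ]⟩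

lemma nsmul_subset_valueSet [DecidableEq (Additive Γ₀ˣ)] {V : ℕ → Submodule k E} (h0 : 1 ∈ V 0)
    (hmul : ∀ d, ∀ x ∈ V d, ∀ y ∈ V 1, x * y ∈ V (d + 1)) {A : Finset (Additive Γ₀ˣ)}
    (hA : ↑A ⊆ valueSet v (V 1)) (d : ℕ) : ↑(d • A) ⊆ valueSet v (V d) := by
  induction d with
  | zero => simpa using zero_mem_valueSet h0
  | succ d ih =>
    rw [succ_nsmul, Finset.coe_add]
    rintro _ ⟨γ, hγ, δ, hδ, rfl⟩
    exact add_mem_valueSet (hmul d) (ih hγ) (hA hδ)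

lemma card_le_finrank_of_subset_valueSet [v.IsTrivialOn k] {V : Submodule k E}
    [FiniteDimensional k V] {A : Finset (Additive Γ₀ˣ)} (hA : ↑A ⊆ valueSet v V) :
    #A ≤ Module.finrank k V := by
  choose x hxV hx using fun γ : A => hA γ.2
  have hind : LinearIndependent k fun γ : A => (⟨x γ, hxV γ⟩ : V) := by
    refine LinearIndependent.of_comp V.subtype (linearIndependent_of_injective_valuation v ?_ ?_)
    · exact fun γ h => (Units.ne_zero _) ((hx γ).symm.trans (by simpa using congrArg v h))
    · intro γ δ h
      refine Subtype.ext (Additive.toMul.injective (Units.ext ?_))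
      rw [← hx γ, ← hx δ]
      exact h
  simpa using hind.fintype_card_le_finrank

lemma finite_valueSet [v.IsTrivialOn k] (V : Submodule k E) [FiniteDimensional k V] :
    (valueSet v V).Finite := by
  by_contra hinf
  obtain ⟨A, hA, hcard⟩ := Set.Infinite.exists_subset_card_eq hinf (Module.finrank k V + 1)
  have := card_le_finrank_of_subset_valueSet hA
  omega

lemma eq_of_valueSet_subset (hres : HasConstantResidues k v) {S V : Submodule k E} (hSV : S ≤ V)
    (hfin : (valueSet v V).Finite) (h : valueSet v V ⊆ valueSet v S) : S = V := by
  by_contra hne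
  let γ (x : E) (hx : x ∉ S) : Additive Γ₀ˣ :=
    .ofMul (Units.mk0 (v x) ((map_ne_zero v).mpr fun h0 => hx (h0 ▸ S.zero_mem)))
  obtain ⟨y, hyV, hyS⟩ := SetLike.exists_of_lt (lt_of_le_of_ne hSV hne)
  obtain ⟨δ, ⟨hδV, z, hzV, hzS, hzδ⟩, hmin⟩ := Set.exists_min_image
    {δ ∈ valueSet v V | ∃ x ∈ V, x ∉ S ∧ v x = δ.toMul} id (hfin.subset (Set.sep_subset _ _))
    ⟨γ y hyS, ⟨y, hyV, rfl⟩, y, hyV, hyS, rfl⟩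
  obtain ⟨s, hsS, hsδ⟩ := h hδV
  have hs0 : s ≠ 0 := (map_ne_zero v).mp (hsδ ▸ Units.ne_zero _)
  obtain ⟨c, hc⟩ := hres (z / s) (by rw [map_div₀, hzδ, hsδ, div_self (Units.ne_zero _)])
  have hzc : z - c • s = (z / s - algebraMap k E c) * s := by
    rw [sub_mul, div_mul_cancel₀ _ hs0, Algebra.smul_def]
  have hzcS : z - c • s ∉ S := fun hmem => hzS <| by
    simpa using S.add_mem hmem (S.smul_mem c hsS)
  have hzcV : z - c • s ∈ V := V.sub_mem hzV (V.smul_mem c (hSV hsS))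
  have hle : v s ≤ v (z - c • s) :=
    hsδ ▸ hmin (γ _ hzcS) ⟨⟨_, hzcV, rfl⟩, _, hzcV, hzcS, rfl⟩
  rw [hzc, map_mul] at hle
  exact hle.not_gt (mul_lt_of_lt_one_left (zero_lt_iff.mpr ((map_ne_zero v).mpr hs0)) hc)

lemma finrank_le_ncard_valueSet [v.IsTrivialOn k] (hres : HasConstantResidues k v)
    (V : Submodule k E) [FiniteDimensional k V] :
    Module.finrank k V ≤ (valueSet v V).ncard := by
  classical
  have hfin := finite_valueSet (v := v) V
  choose x hxV hx using fun γ : valueSet v V => γ.2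
  have := hfin.to_subtype
  have hspan : Submodule.span k (Set.range x) = V := by
    refine eq_of_valueSet_subset hres ?_ hfin ?_
    · exact Submodule.span_le.mpr (by rintro _ ⟨γ, rfl⟩; exact hxV γ)
    · exact fun γ hγ => ⟨x ⟨γ, hγ⟩, Submodule.subset_span ⟨_, rfl⟩, hx ⟨γ, hγ⟩⟩
  have := Fintype.ofFinite (valueSet v V)
  calc Module.finrank k V = Module.finrank k (Submodule.span k (Set.range x)) := by rw [hspan]
    _ ≤ Fintype.card (valueSet v V) := finrank_range_le_card x
    _ = (valueSet v V).ncard := (Set.ncard_eq_toFinset_card' _).trans (Set.toFinset_card _) |>.symm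

theorem minHilbert_le_finrank_of_valuation [v.IsTrivialOn k] (hres : HasConstantResidues k v)
    {V : ℕ → Submodule k E} [∀ d, FiniteDimensional k (V d)] (h0 : 1 ∈ V 0)
    (hmul : ∀ d, ∀ x ∈ V d, ∀ y ∈ V 1, x * y ∈ V (d + 1)) {N n : ℕ}
    (hN : N + 1 ≤ Module.finrank k (V 1)) {g : Fin (n + 1) → Additive Γ₀ˣ}
    (hgV : ∀ i, g i ∈ valueSet v (V 1)) (hg : LinearIndependent ℤ g) (d : ℕ) :
    minHilbert N n d ≤ Module.finrank k (V d) := by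
  classical
  have hfin := finite_valueSet (v := v) (V 1)
  have hcard : N + 1 ≤ #hfin.toFinset := by
    rw [← Set.ncard_eq_toFinset_card _ hfin]
    exact hN.trans (finrank_le_ncard_valueSet hres _)
  refine (minHilbert_le_card_nsmul_of_linearIndependent hcard (by simpa using hgV) hg).trans
    (card_le_finrank_of_subset_valueSet (v := v) ?_)
  exact nsmul_subset_valueSet h0 hmul (by simp) d

end ValueSet

section HilbertFunction

open MvPolynomial

variable {k : Type*} [Field k]

section Monomials

variable {Γ ι : Type*} [AddCommGroup Γ] [LinearOrder Γ] [IsOrderedAddMonoid Γ]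

lemma prod_single_pow [Fintype ι] (γ : ι → Γ) (m : ι → ℕ) :
    ∏ i, HahnSeries.single (γ i) (1 : k) ^ m i = HahnSeries.single (∑ i, m i • γ i) 1 := by
  classical
  simp only [HahnSeries.single_pow, one_pow]
  induction (Finset.univ : Finset ι) using Finset.induction_on with
  | empty => simp
  | insert i s hi ih => simp [Finset.prod_insert hi, Finset.sum_insert hi, ih]

lemma algebraicIndependent_single [Finite ι] {γ : ι → Γ} (hγ : LinearIndependent ℤ γ) :
    AlgebraicIndependent k fun i => HahnSeries.single (γ i) (1 : k) := by
  cases nonempty_fintype ι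
  refine LinearMap.injective_of_linearIndependent
    (f := (aeval (R := k) fun i => HahnSeries.single (γ i) (1 : k)).toLinearMap)
    (basisMonomials ι k).span_eq ?_
  have hcomp : (aeval fun i => HahnSeries.single (γ i) (1 : k)).toLinearMap ∘ basisMonomials ι k =
      fun m => HahnSeries.single (∑ i, m i • γ i) 1 := by
    ext1 m
    rw [Function.comp_apply, coe_basisMonomials, AlgHom.toLinearMap_apply, aeval_monomial, map_one,
      one_mul, Finsupp.prod_fintype _ _ (by simp), prod_single_pow]
  have hv (δ : Γ) : hahnValuation Γ k (HahnSeries.single δ 1) = (δ : WithTop Γ) :=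
    HahnSeries.orderTop_single one_ne_zero
  rw [hcomp]
  refine linearIndependent_of_injective_valuation (hahnValuation Γ k) (fun m => ?_) fun m m' h => ?_
  · exact HahnSeries.single_ne_zero one_ne_zero
  · have hsum : ∑ i, m i • γ i = ∑ i, m' i • γ i :=
      WithTop.coe_injective ((hv _).symm.trans (h.trans (hv _)))
    have hm := Fintype.linearIndependent_iffₛ.mp hγ (fun i => m i) (fun i => m' i) (by simpa)
    exact Finsupp.ext fun i => by exact_mod_cast hm i

lemma exists_injective_addMonoidHom_units {E Γ₀ : Type*} [Field E] [Algebra (HahnSeries Γ k) E]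
    [LinearOrderedCommGroupWithZero Γ₀] (w : Valuation E Γ₀)
    [(hahnValuation Γ k).HasExtension w] :
    ∃ φ : Γ →+ Additive Γ₀ˣ, Function.Injective φ ∧
      ∀ γ, w (algebraMap (HahnSeries Γ k) E (HahnSeries.single γ 1)) = (φ γ).toMul := by
  let ψ : Multiplicative Γ →* HahnSeries Γ k :=
    { toFun := fun γ => HahnSeries.single γ.toAdd 1
      map_one' := rfl
      map_mul' := fun γ δ => by simp }
  let χ : Multiplicative Γ →* Γ₀ := (w.comap (algebraMap (HahnSeries Γ k) E) : _ →* Γ₀).comp ψ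
  refine ⟨χ.toHomUnits.toAdditiveRight, ?_, fun γ => rfl⟩
  rw [injective_iff_map_eq_zero]
  intro γ hγ
  have hw : w (algebraMap (HahnSeries Γ k) E (HahnSeries.single γ 1)) = 1 :=
    congrArg (fun u : Additive Γ₀ˣ => (u.toMul : Γ₀)) hγ
  rw [Valuation.HasExtension.val_map_eq_one_iff (hahnValuation Γ k), hahnValuation_eq_one_iff,
    HahnSeries.orderTop_single one_ne_zero] at hw
  exact WithTop.coe_injective hw

end Monomials

lemma exists_injective_algHom_of_isTranscendenceBasis {A E ι : Type*} [CommRing A] [IsDomain A]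
    [Algebra k A] [Field E] [IsAlgClosed E] [Algebra k E] {x : ι → A}
    (hx : IsTranscendenceBasis k x) {z : ι → E} (hz : AlgebraicIndependent k z) :
    ∃ f : A →ₐ[k] E, Function.Injective f ∧ ∀ i, f (x i) = z i := by
  let S := Algebra.adjoin k (Set.range x)
  let e : MvPolynomial ι k ≃ₐ[k] S := hx.1.aevalEquiv
  let g : S →ₐ[k] E := (aeval z).comp e.symm.toAlgHom
  have hg : Function.Injective g :=
    Function.Injective.comp (g := aeval (R := k) z) hz e.symm.injective
  let : Algebra S E := g.toRingHom.toAlgebra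
  have : IsScalarTower k S E := .of_algebraMap_eq fun c => (g.commutes c).symm
  have : FaithfulSMul S E := (faithfulSMul_iff_algebraMap_injective _ _).mpr hg
  have : Module.IsTorsionFree S E := .trans_faithfulSMul _ E E
  have := hx.isAlgebraic
  let f : A →ₐ[S] E := IsAlgClosed.lift
  refine ⟨f.restrictScalars k, ?_, fun i => ?_⟩
  · rw [injective_iff_map_eq_zero]
    by_contra! ⟨a, ha, ha0⟩
    refine Ideal.comap_ne_bot_of_algebraic_mem (I := RingHom.ker f) ha0 ha
      (Algebra.IsAlgebraic.isAlgebraic (R := S) a) ?_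
    exact eq_bot_iff.mpr fun c hc =>
      (injective_iff_map_eq_zero g).mp hg c ((f.commutes c).symm.trans hc)
  · have hxi : algebraMap S A (e (X i)) = x i := by
      rw [AlgebraicIndependent.algebraMap_aevalEquiv, aeval_X]
    calc f (x i) = g (e (X i)) := by rw [← hxi]; exact f.commutes _
      _ = z i := by simp [g]

lemma exists_valuation_hasConstantResidues.{u} {k : Type u} [Field k] [IsAlgClosed k]
    {A : Type*} [CommRing A] [IsDomain A] [Algebra k A] {n : ℕ} {x : Fin n → A}
    (hx : IsTranscendenceBasis k x) :
    ∃ (E : Type u) (_ : Field E) (_ : Algebra k E) (f : A →ₐ[k] E) (Γ₀ : Type u)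
      (_ : LinearOrderedCommGroupWithZero Γ₀) (w : Valuation E Γ₀) (_ : w.IsTrivialOn k)
      (g : Fin n → Additive Γ₀ˣ), Function.Injective f ∧ HasConstantResidues k w ∧
        LinearIndependent ℤ g ∧ ∀ i, w (f (x i)) = (g i).toMul := by
  let Γ := Lex (Fin n → ℤ)
  let γ : Fin n → Γ := fun i => toLex (Pi.single i 1)
  have hγ : LinearIndependent ℤ γ :=
    (Pi.linearIndependent_single_one (Fin n) ℤ).map' (toLexLinearEquiv ℤ _).toLinearMap
      (LinearEquiv.ker _)
  let H := HahnSeries Γ k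
  let E := AlgebraicClosure H
  obtain ⟨W, _⟩ := exists_hasExtension_valuationSubring (E := E) (hahnValuation Γ k)
  have : W.valuation.IsTrivialOn k := isTrivialOn_of_hasExtension (hahnValuation Γ k) _
  have hz := (algebraicIndependent_single (k := k) hγ).map' (f := IsScalarTower.toAlgHom k H E)
    (FaithfulSMul.algebraMap_injective H E)
  obtain ⟨f, hf, hfx⟩ := exists_injective_algHom_of_isTranscendenceBasis hx hz
  obtain ⟨φ, hφ, hφγ⟩ := exists_injective_addMonoidHom_units (k := k) (Γ := Γ) W.valuation
  refine ⟨E, inferInstance, inferInstance, f, W.ValueGroup, inferInstance, W.valuation, this,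
    φ ∘ γ, hf, .of_hasExtension _ (hasConstantResidues_hahnValuation (Γ := Γ)),
    hγ.map' φ.toIntLinearMap (LinearMap.ker_eq_bot.mpr hφ), fun i => ?_⟩
  rw [hfx]
  exact hφγ (γ i)

theorem minHilbert_le_finrank_map_homogeneousSubmodule [IsAlgClosed k] {σ : Type*} [Finite σ]
    (P : Ideal (MvPolynomial σ k)) [P.IsPrime] {N n : ℕ} {J : Fin (N + 1) → σ}
    (hJ : LinearIndependent k fun j => Ideal.Quotient.mk P (X (J j))) {J' : Fin (n + 1) → σ}
    (hJ' : IsTranscendenceBasis k fun j => Ideal.Quotient.mk P (X (J' j))) (d : ℕ) :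
    minHilbert N n d ≤
      Module.finrank k ((homogeneousSubmodule σ k d).map (Ideal.Quotient.mkₐ k P).toLinearMap) := by
  obtain ⟨E, _, _, f, Γ₀, _, w, _, g, hf, hw, hg, hfg⟩ := exists_valuation_hasConstantResidues hJ'
  let q : MvPolynomial σ k →ₐ[k] E := f.comp (Ideal.Quotient.mkₐ k P)
  let V (d : ℕ) : Submodule k E := (homogeneousSubmodule σ k d).map q.toLinearMap
  have (d : ℕ) : FiniteDimensional k (homogeneousSubmodule σ k d) :=
    Module.Finite.iff_fg.mpr (homogeneousSubmodule_fg _ _ _)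
  have hX (i : σ) : q (X i) ∈ V 1 := ⟨X i, isHomogeneous_X _ _, rfl⟩
  have hN : N + 1 ≤ Module.finrank k (V 1) := by
    have hli : LinearIndependent k fun j => (⟨q (X (J j)), hX _⟩ : V 1) :=
      .of_comp (V 1).subtype (hJ.map' f.toLinearMap (LinearMap.ker_eq_bot.mpr hf))
    simpa using hli.fintype_card_le_finrank
  have hmul : ∀ d, ∀ x ∈ V d, ∀ y ∈ V 1, x * y ∈ V (d + 1) := by
    rintro d _ ⟨p, hp, rfl⟩ _ ⟨r, hr, rfl⟩
    exact ⟨p * r, IsHomogeneous.mul hp hr, map_mul q p r⟩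
  refine (minHilbert_le_finrank_of_valuation hw (V := V) ⟨1, isHomogeneous_one _ _, map_one q⟩
    hmul hN (fun i => ⟨_, hX (J' i), hfg i⟩) hg d).trans_eq ?_
  have hV : V d = ((homogeneousSubmodule σ k d).map (Ideal.Quotient.mkₐ k P).toLinearMap).map
      f.toLinearMap := by rw [← Submodule.map_comp]; rfl
  rw [hV]
  exact (LinearEquiv.finrank_eq (Submodule.equivMapOfInjective f.toLinearMap hf _)).symm

end HilbertFunction

section TranscendenceDegree

open MvPolynomial

variable {k : Type*} [Field k]

lemma natCast_le_trdeg_iff {A : Type*} [CommRing A] [IsDomain A] [Algebra k A] {n : ℕ} :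
    (n : Cardinal) ≤ Algebra.trdeg k A ↔ ∃ x : Fin n → A, AlgebraicIndependent k x := by
  refine ⟨fun h => ?_, fun ⟨x, hx⟩ => by simpa using hx.lift_cardinalMk_le_trdeg⟩
  obtain ⟨s, hs⟩ := exists_isTranscendenceBasis k A
  rw [← hs.cardinalMk_eq_trdeg] at h
  obtain ⟨t, hts, htn⟩ := Cardinal.le_mk_iff_exists_subset.mp h
  obtain ⟨e⟩ : Nonempty (Fin n ≃ t) := by
    rw [← Cardinal.lift_mk_eq', htn]; simp
  exact ⟨fun i => e i, hs.1.comp (fun i => ⟨e i, hts (e i).2⟩)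
    ((Set.inclusion_injective hts).comp e.injective)⟩

section Primes

variable {R : Type*} [CommRing R] [Algebra k R]

lemma trdeg_quotient_anti {P Q : Ideal R} (h : P ≤ Q) :
    Algebra.trdeg k (R ⧸ Q) ≤ Algebra.trdeg k (R ⧸ P) :=
  trdeg_le_of_surjective (Ideal.Quotient.factorₐ k h) (Ideal.Quotient.factor_surjective h)

lemma transcendental_adjoin_of_map_eq_zero {A B ι : Type*} [CommRing A] [IsDomain A] [Algebra k A]
    [CommRing B] [Algebra k B] (π : A →ₐ[k] B) {z : ι → A} (hz : AlgebraicIndependent k (π ∘ z))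
    {f : A} (hf : f ≠ 0) (hπf : π f = 0) :
    Transcendental (Algebra.adjoin k (Set.range z)) f := by
  intro halg
  obtain ⟨q, hq0, hq⟩ :=
    halg.exists_nonzero_coeff_and_aeval_eq_zero (mem_nonZeroDivisors_of_ne_zero hf)
  obtain ⟨g, hg⟩ := (Algebra.adjoin_range_eq_range_aeval k z).le (q.coeff 0).2
  have hg' : aeval z g = (q.coeff 0 : A) := hg
  have hconst : π (q.coeff 0 : A) = 0 := by
    have hdiv := congrArg (π ∘ Polynomial.aeval f) (Polynomial.divX_mul_X_add q)
    simpa [hq, hπf] using hdiv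
  have hg0 : g = 0 := algebraicIndependent_iff.mp hz g <| by
    rw [← hconst, ← hg']
    exact (comp_aeval_apply z π g).symm
  exact hq0 (Subtype.ext (by rw [← hg', hg0, map_zero, ZeroMemClass.coe_zero]))

lemma add_one_le_trdeg_quotient_of_lt {P Q : Ideal R} [P.IsPrime] [Q.IsPrime] (h : P < Q) {n : ℕ}
    (hn : (n : Cardinal) ≤ Algebra.trdeg k (R ⧸ Q)) :
    ((n + 1 : ℕ) : Cardinal) ≤ Algebra.trdeg k (R ⧸ P) := by
  obtain ⟨x, hx⟩ := natCast_le_trdeg_iff.mp hn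
  obtain ⟨f, hfQ, hfP⟩ := SetLike.exists_of_lt h
  choose y hy using fun i => Ideal.Quotient.mk_surjective (x i)
  let π : (R ⧸ P) →ₐ[k] (R ⧸ Q) := Ideal.Quotient.factorₐ k h.le
  let z : Fin n → R ⧸ P := fun i => Ideal.Quotient.mk P (y i)
  have hπz : AlgebraicIndependent k (π ∘ z) := by
    rwa [show π ∘ z = x from _root_.funext hy]
  have htr := transcendental_adjoin_of_map_eq_zero π hπz
    (f := Ideal.Quotient.mk P f) (by rwa [Ne, Ideal.Quotient.eq_zero_iff_mem])
    (Ideal.Quotient.eq_zero_iff_mem.mpr hfQ)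
  have hz := (AlgebraicIndependent.of_comp π hπz).option_iff_transcendental _ |>.mpr htr
  simpa using hz.lift_cardinalMk_le_trdeg

lemma length_le_trdeg_quotient_head (l : LTSeries (PrimeSpectrum R)) :
    (l.length : Cardinal) ≤ Algebra.trdeg k (R ⧸ l.head.asIdeal) := by
  induction l using RelSeries.inductionOn with
  | singleton p => simp
  | cons l p hp ih =>
    rw [RelSeries.head_cons, RelSeries.cons_length]
    exact add_one_le_trdeg_quotient_of_lt hp ih

lemma le_trdeg_quotient_of_le_ringKrullDim (P : Ideal R) {n : ℕ}
    (hn : (n : WithBot ℕ∞) ≤ ringKrullDim (R ⧸ P)) :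
    (n : Cardinal) ≤ Algebra.trdeg k (R ⧸ P) := by
  rw [ringKrullDim_quotient, Order.le_krullDim_iff] at hn
  obtain ⟨l, rfl⟩ := hn
  exact (length_le_trdeg_quotient_head (k := k) (l.map (fun q => q.1) (fun _ _ h => h))).trans
    (trdeg_quotient_anti l.head.2)

end Primes

section Coordinates

variable {σ : Type*} (P : Ideal (MvPolynomial σ k))

lemma aeval_mk_X {ι : Type*} (J : ι → σ) (q : MvPolynomial ι k) :
    aeval (fun j => Ideal.Quotient.mk P (X (J j))) q = Ideal.Quotient.mk P (rename J q) := by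
  rw [rename_eq_aeval]
  exact (comp_aeval_apply _ (Ideal.Quotient.mkₐ k P) q).symm

lemma algebraicIndependent_mk_X_iff {ι : Type*} {J : ι → σ} :
    AlgebraicIndependent k (fun j => Ideal.Quotient.mk P (X (J j))) ↔
      ∀ q : MvPolynomial ι k, rename J q ∈ P → q = 0 := by
  simp only [algebraicIndependent_iff, aeval_mk_X, Ideal.Quotient.eq_zero_iff_mem]

lemma adjoin_range_mk_X_eq_top :
    Algebra.adjoin k (Set.range fun i : σ => Ideal.Quotient.mk P (X i)) = ⊤ := by
  have h := AlgHom.map_adjoin (Ideal.Quotient.mkₐ k P) (Set.range X)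
  rw [adjoin_range_X, Algebra.map_top, ← Set.range_comp] at h
  rw [← (AlgHom.range_eq_top _).mpr (Ideal.Quotient.mkₐ_surjective k P), h]
  rfl

lemma exists_isTranscendenceBasis_mk_X [P.IsPrime] {n : ℕ}
    (hn : Algebra.trdeg k (MvPolynomial σ k ⧸ P) = n) :
    ∃ J : Fin n → σ, IsTranscendenceBasis k fun j => Ideal.Quotient.mk P (X (J j)) := by
  have : Algebra.IsAlgebraic
      (Algebra.adjoin k (Set.range fun i : σ => Ideal.Quotient.mk P (X i)))
      (MvPolynomial σ k ⧸ P) := by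
    rw [adjoin_range_mk_X_eq_top]
    exact ⟨fun x => isAlgebraic_algebraMap (⟨x, trivial⟩ : (⊤ : Subalgebra k _))⟩
  have := (faithfulSMul_iff_algebraMap_injective k (MvPolynomial σ k ⧸ P)).mpr
    (algebraMap k _).injective
  obtain ⟨t, ht, htb⟩ := exists_isTranscendenceBasis_subset (R := k)
    (Set.range fun i : σ => Ideal.Quotient.mk P (X i))
  have hcard := htb.cardinalMk_eq_trdeg.trans hn
  obtain ⟨e⟩ : Nonempty (Fin n ≃ t) := by
    rw [← Cardinal.lift_mk_eq', hcard]; simp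
  choose J hJ using fun j => ht (e j).2
  refine ⟨J, ?_⟩
  rw [show (fun j => Ideal.Quotient.mk P (X (J j))) = (↑) ∘ e from _root_.funext hJ]
  exact (isTranscendenceBasis_equiv e).mpr htb

lemma natCast_le_trdeg_quotient_iff [Finite σ] [P.IsPrime] {n : ℕ} :
    (n : Cardinal) ≤ Algebra.trdeg k (MvPolynomial σ k ⧸ P) ↔
      ∃ J : Fin n → σ, ∀ q : MvPolynomial (Fin n) k, rename J q ∈ P → q = 0 := by
  simp only [← algebraicIndependent_mk_X_iff]
  refine ⟨fun hn => ?_, fun ⟨J, hJ⟩ => natCast_le_trdeg_iff.mpr ⟨_, hJ⟩⟩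
  obtain ⟨N, hN⟩ := Cardinal.lt_aleph0.mp
    (trdeg_lt_aleph0_of_finiteType (R := k) (S := MvPolynomial σ k ⧸ P))
  obtain ⟨J, hJ⟩ := exists_isTranscendenceBasis_mk_X P hN
  have hnN : n ≤ N := by rw [hN] at hn; exact_mod_cast hn
  exact ⟨J ∘ Fin.castLE hnN, hJ.1.comp _ (Fin.castLE_injective hnN)⟩

end Coordinates

section PrincipalIdealTheorem

lemma eq_zero_of_dvd_rename {σ τ : Type*} {f : τ → σ} (hf : Function.Injective f) {i : σ}
    (hi : i ∉ Set.range f) {g : MvPolynomial σ k} (hig : i ∈ g.vars) {q : MvPolynomial τ k}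
    (hdvd : g ∣ rename f q) : q = 0 := by
  classical
  obtain ⟨h, hh⟩ := hdvd
  by_contra hq
  have hr : g * h ≠ 0 := hh ▸ (map_ne_zero_iff _ (rename_injective f hf)).mpr hq
  have hdeg := degreeOf_mul_eq (n := i) (left_ne_zero_of_mul hr) (right_ne_zero_of_mul hr)
  have hri : degreeOf i (rename f q) = 0 := by
    by_contra hne
    obtain ⟨j, -, hj⟩ := mem_vars_rename f q (mem_vars_iff_degreeOf_ne_zero.mpr hne)
    exact hi ⟨j, hj⟩
  have := mem_vars_iff_degreeOf_ne_zero.mp hig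
  rw [← hh] at hdeg
  omega

lemma vars_nonempty_of_prime {σ : Type*} {g : MvPolynomial σ k} (hg : Prime g) :
    g.vars.Nonempty := by
  rw [Finset.nonempty_iff_ne_empty]
  intro hvars
  rw [vars_eq_empty_iff_eq_C] at hvars
  rw [hvars] at hg
  exact hg.not_isUnit ((IsUnit.mk0 _ fun h => hg.ne_zero (by rw [h, C_0])).map C)

lemma le_trdeg_quotient_of_height_le_one {n : ℕ} (p : Ideal (MvPolynomial (Fin (n + 1)) k))
    [hp : p.IsPrime] (hht : p.height ≤ 1) :
    (n : Cardinal) ≤ Algebra.trdeg k (MvPolynomial (Fin (n + 1)) k ⧸ p) := by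
  rw [natCast_le_trdeg_quotient_iff]
  by_cases hbot : p = ⊥
  · refine ⟨Fin.succ, fun q hq => ?_⟩
    rw [hbot, Ideal.mem_bot] at hq
    exact (map_eq_zero_iff _ (rename_injective _ (Fin.succ_injective n))).mp hq
  have hht1 : p.height = 1 :=
    hht.antisymm (Order.one_le_iff_ne_zero.mpr (mt Ideal.height_eq_zero_iff_eq_bot.mp hbot))
  obtain ⟨g, hgp, hg⟩ := hp.exists_mem_prime_of_ne_bot hbot
  obtain ⟨i, hi⟩ := vars_nonempty_of_prime hg
  refine ⟨i.succAbove, fun q hq => ?_⟩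
  rw [p.eq_span_singleton_of_height_eq_one hht1 hgp hg, Ideal.mem_span_singleton] at hq
  exact eq_zero_of_dvd_rename Fin.succAbove_right_injective (by simp) hi hq

/- Noether normalization makes `S` integral over a polynomial ring; by going down, a minimal prime
of `f` contracts to a prime of height at most one there. -/
lemma exists_isPrime_mem_le_trdeg_quotient {S : Type*} [CommRing S] [IsDomain S] [Algebra k S]
    [Algebra.FiniteType k S] {M : Ideal S} [M.IsPrime] {f : S} (hf : f ∈ M) :
    ∃ q : Ideal S, q.IsPrime ∧ q ≤ M ∧ f ∈ q ∧ ∀ n : ℕ,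
      ((n + 1 : ℕ) : Cardinal) ≤ Algebra.trdeg k S → (n : Cardinal) ≤ Algebra.trdeg k (S ⧸ q) := by
  obtain ⟨q, hq, hqM⟩ := Ideal.exists_minimalPrimes_le ((Ideal.span_singleton_le_iff_mem M).mpr hf)
  have : q.IsPrime := hq.isPrime
  have : IsNoetherianRing S := Algebra.FiniteType.isNoetherianRing k S
  refine ⟨q, hq.isPrime, hqM, hq.le (Ideal.mem_span_singleton_self f), fun n hn => ?_⟩
  obtain ⟨s, g, hg, hgint⟩ := exists_integral_inj_algHom_of_fg k S
  algebraize [g.toRingHom]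
  have : IsScalarTower k (MvPolynomial (Fin s) k) S :=
    IsScalarTower.of_algebraMap_eq fun x => (g.commutes x).symm
  have : FaithfulSMul (MvPolynomial (Fin s) k) S :=
    (faithfulSMul_iff_algebraMap_injective _ _).mpr hg
  have hbasis := (IsTranscendenceBasis.mvPolynomial (Fin s) k).algebraMap_comp (A := S)
  have hs : (s : Cardinal) = Algebra.trdeg k S := by
    simpa using hbasis.lift_cardinalMk_eq_trdeg
  rw [← hs, Nat.cast_le] at hn
  obtain ⟨s, rfl⟩ : ∃ t, s = t + 1 := ⟨s - 1, by omega⟩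
  let p := q.under (MvPolynomial (Fin (s + 1)) k)
  have : q.LiesOver p := ⟨rfl⟩
  have hp : p.height ≤ 1 := calc
    p.height ≤ q.height := by
      rw [Ideal.height_eq_height_add_of_liesOver_of_hasGoingDown p q]; exact le_self_add
    _ ≤ 1 := Ideal.height_le_one_of_isPrincipal_of_mem_minimalPrimes _ q hq
  obtain ⟨x, hx⟩ := natCast_le_trdeg_iff.mp
    ((Nat.cast_le.mpr (by omega : n ≤ s)).trans (le_trdeg_quotient_of_height_le_one p hp))
  exact natCast_le_trdeg_iff.mpr ⟨_, hx.map' (f := Ideal.quotientMapₐ q g le_rfl)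
    (Ideal.quotientMap_injective' (f := g.toRingHom) (H := le_rfl) le_rfl)⟩

variable {R : Type*} [CommRing R] [Algebra k R] [Algebra.FiniteType k R]

lemma exists_isPrime_between_mem_le_trdeg_quotient {P M : Ideal R} [P.IsPrime] [M.IsPrime]
    (hPM : P ≤ M) {f : R} (hf : f ∈ M) :
    ∃ Q : Ideal R, Q.IsPrime ∧ P ≤ Q ∧ Q ≤ M ∧ f ∈ Q ∧ ∀ n : ℕ,
      ((n + 1 : ℕ) : Cardinal) ≤ Algebra.trdeg k (R ⧸ P) →
        (n : Cardinal) ≤ Algebra.trdeg k (R ⧸ Q) := by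
  have hM : (M.map (Ideal.Quotient.mk P)).comap (Ideal.Quotient.mk P) = M := by
    rw [Ideal.comap_map_of_surjective' _ Ideal.Quotient.mk_surjective, Ideal.mk_ker,
      sup_eq_left.mpr hPM]
  have : (M.map (Ideal.Quotient.mk P)).IsPrime :=
    Ideal.map_isPrime_of_surjective Ideal.Quotient.mk_surjective (by simpa using hPM)
  obtain ⟨q, hq, hqM, hfq, htr⟩ :=
    exists_isPrime_mem_le_trdeg_quotient (k := k) (Ideal.mem_map_of_mem (Ideal.Quotient.mk P) hf)
  refine ⟨q.comap (Ideal.Quotient.mk P), inferInstance, ?_, ?_, hfq, fun n hn => ?_⟩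
  · simpa only [Ideal.mk_ker] using Ideal.ker_le_comap (K := q) (Ideal.Quotient.mk P)
  · exact (Ideal.comap_mono hqM).trans hM.le
  · exact (htr n hn).trans (trdeg_le_of_surjective
      (Ideal.quotientMapₐ q (Ideal.Quotient.mkₐ k P) le_rfl)
      (Ideal.quotientMap_surjective (H := le_rfl) Ideal.Quotient.mk_surjective))

lemma exists_ltSeries_of_le_trdeg_quotient {n : ℕ} (P : Ideal R) [hP : P.IsPrime]
    (hn : (n : Cardinal) ≤ Algebra.trdeg k (R ⧸ P)) :
    ∃ l : LTSeries (PrimeSpectrum R), l.length = n ∧ P ≤ l.head.asIdeal := by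
  induction n generalizing P with
  | zero => exact ⟨RelSeries.singleton _ ⟨P, hP⟩, rfl, le_rfl⟩
  | succ n ih =>
    obtain ⟨M, hM, hPM⟩ := Ideal.exists_le_maximal P hP.ne_top
    have hne : P ≠ M := by
      rintro rfl
      let : Field (R ⧸ P) := Ideal.Quotient.field P
      have : Module.Finite k (R ⧸ P) := finite_of_finite_type_of_isJacobsonRing k (R ⧸ P)
      rw [trdeg_eq_zero (R := k) (A := R ⧸ P)] at hn
      simp at hn
    obtain ⟨f, hfM, hfP⟩ := SetLike.exists_of_lt (hPM.lt_of_ne hne)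
    obtain ⟨Q, hQ, hPQ, hQM, hfQ, htr⟩ :=
      exists_isPrime_between_mem_le_trdeg_quotient (k := k) hPM hfM
    obtain ⟨l, hl, hQl⟩ := ih Q (htr n hn)
    have hPl : P < l.head.asIdeal :=
      (hPQ.lt_of_ne (by rintro rfl; exact hfP hfQ)).trans_le hQl
    exact ⟨l.cons ⟨P, hP⟩ hPl, by simp [hl], by simp⟩

lemma le_ringKrullDim_quotient_of_le_trdeg {I P : Ideal R} [P.IsPrime] (hIP : I ≤ P) {n : ℕ}
    (hn : (n : Cardinal) ≤ Algebra.trdeg k (R ⧸ P)) :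
    (n : WithBot ℕ∞) ≤ ringKrullDim (R ⧸ I) := by
  obtain ⟨l, rfl, hl⟩ := exists_ltSeries_of_le_trdeg_quotient P hn
  rw [ringKrullDim_quotient]
  let l' : LTSeries (PrimeSpectrum.zeroLocus (R := R) I) :=
    { length := l.length
      toFun := fun i => ⟨l i, (hIP.trans hl).trans (l.head_le i)⟩
      step := l.step }
  exact Order.LTSeries.length_le_krullDim l'

end PrincipalIdealTheorem

end TranscendenceDegree

section BaseChange

open MvPolynomial

variable {L Ω σ : Type*} [Field L] [Field Ω] [Algebra L Ω]

/-- The polynomial obtained by applying the linear functional `φ` to every coefficient. The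
functionals `φ` play the role of coordinates that descend statements from `Ω` to `L`. -/
noncomputable def mapCoeffs (φ : Ω →ₗ[L] L) : MvPolynomial σ Ω →ₗ[L] MvPolynomial σ L where
  toFun f := AddMonoidAlgebra.map (φ : Ω →+ L) f
  map_add' f g := by ext m; exact map_add φ _ _
  map_smul' c f := by ext m; exact map_smul φ _ _

@[simp]
lemma coeff_mapCoeffs (φ : Ω →ₗ[L] L) (f : MvPolynomial σ Ω) (m : σ →₀ ℕ) :
    coeff m (mapCoeffs φ f) = φ (coeff m f) := rfl

lemma mapCoeffs_monomial (φ : Ω →ₗ[L] L) (m : σ →₀ ℕ) (a : Ω) :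
    mapCoeffs φ (monomial m a) = monomial m (φ a) := by
  classical
  ext n
  simp only [coeff_mapCoeffs, coeff_monomial, apply_ite φ, map_zero]

lemma mapCoeffs_mul_map (φ : Ω →ₗ[L] L) (g : MvPolynomial σ Ω) (p : MvPolynomial σ L) :
    mapCoeffs φ (g * map (algebraMap L Ω) p) = mapCoeffs φ g * p := by
  classical
  ext m
  simp only [coeff_mapCoeffs, coeff_mul, map_sum, coeff_map]
  refine Finset.sum_congr rfl fun x _ => ?_
  rw [mul_comm, ← Algebra.smul_def, map_smul, smul_eq_mul, mul_comm]

lemma mapCoeffs_map {φ : Ω →ₗ[L] L} (hφ : φ 1 = 1) (p : MvPolynomial σ L) :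
    mapCoeffs φ (map (algebraMap L Ω) p) = p := by
  ext m
  rw [coeff_mapCoeffs, coeff_map, Algebra.algebraMap_eq_smul_one, map_smul, hφ, smul_eq_mul,
    mul_one]

lemma eval_mapCoeffs (φ : Ω →ₗ[L] L) (f : MvPolynomial σ Ω) (v : σ → L) :
    eval v (mapCoeffs φ f) = φ (eval (algebraMap L Ω ∘ v) f) := by
  induction f using MvPolynomial.induction_on' with
  | monomial m a =>
    have hprod : eval (algebraMap L Ω ∘ v) (monomial m a) =
        (m.prod fun i e => v i ^ e) • a := by
      simp [eval_monomial, Algebra.smul_def, Finsupp.prod, mul_comm]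
    rw [hprod, map_smul, mapCoeffs_monomial, eval_monomial, smul_eq_mul, mul_comm]
  | add p q hp hq => simp only [map_add, hp, hq]

lemma mapCoeffs_rename {τ : Type*} (φ : Ω →ₗ[L] L) (J : τ → σ) (q : MvPolynomial τ Ω) :
    mapCoeffs φ (rename J q) = rename J (mapCoeffs φ q) := by
  induction q using MvPolynomial.induction_on' with
  | monomial m a => simp only [rename_monomial, mapCoeffs_monomial]
  | add p q hp hq => simp only [map_add, hp, hq]

lemma exists_eq_sum_C_mul_map_mapCoeffs {ι : Type*} (B : Module.Basis ι L Ω)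
    (f : MvPolynomial σ Ω) :
    ∃ S : Finset ι, f = ∑ i ∈ S, C (B i) * map (algebraMap L Ω) (mapCoeffs (B.coord i) f) := by
  classical
  refine ⟨f.support.biUnion fun m => (B.repr (coeff m f)).support, ?_⟩
  ext m
  simp only [coeff_sum, coeff_C_mul, coeff_map, coeff_mapCoeffs, Module.Basis.coord_apply]
  by_cases hm : m ∈ f.support
  · conv_lhs => rw [← B.linearCombination_repr (coeff m f)]
    refine Finset.sum_subset_zero_on_sdiff
      (Finset.subset_biUnion_of_mem (fun m => (B.repr (coeff m f)).support) hm)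
      (fun i hi => ?_) (fun i _ => (Algebra.smul_def _ _).trans (mul_comm _ _))
    rw [Finsupp.notMem_support_iff.mp (Finset.mem_sdiff.mp hi).2, map_zero, mul_zero]
  · simp [notMem_support_iff.mp hm]

lemma mem_map_iff_forall_mapCoeffs_mem {P : Ideal (MvPolynomial σ L)} {f : MvPolynomial σ Ω} :
    f ∈ P.map (map (algebraMap L Ω)) ↔ ∀ φ : Ω →ₗ[L] L, mapCoeffs φ f ∈ P := by
  refine ⟨fun hf φ => ?_, fun h => ?_⟩
  · obtain ⟨n, a, g, rfl⟩ := Submodule.mem_span_set'.mp hf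
    rw [map_sum]
    refine P.sum_mem fun i _ => ?_
    obtain ⟨p, hp, hpg⟩ := (g i).2
    rw [smul_eq_mul, ← hpg]
    exact (mapCoeffs_mul_map φ (a i) p).symm ▸ P.mul_mem_left _ hp
  · obtain ⟨S, hS⟩ := exists_eq_sum_C_mul_map_mapCoeffs (Module.Basis.ofVectorSpace L Ω) f
    rw [hS]
    exact Ideal.sum_mem _ fun i _ => Ideal.mul_mem_left _ _ (Ideal.mem_map_of_mem _ (h _))

lemma comap_map_map_algebraMap (P : Ideal (MvPolynomial σ L)) :
    (P.map (map (algebraMap L Ω))).comap (map (algebraMap L Ω)) = P := by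
  obtain ⟨φ, hφ⟩ := (Algebra.linearMap L Ω).exists_leftInverse_of_injective
    (LinearMap.ker_eq_bot.mpr (algebraMap L Ω).injective)
  have hφ1 : φ 1 = 1 := by simpa using LinearMap.congr_fun hφ 1
  refine le_antisymm (fun f hf => ?_) Ideal.le_comap_map
  rw [← mapCoeffs_map hφ1 f]
  exact mem_map_iff_forall_mapCoeffs_mem.mp hf φ

lemma exists_functional_ne_zero {a : Ω} (ha : a ≠ 0) : ∃ φ : Ω →ₗ[L] L, φ a ≠ 0 := by
  by_contra! h
  exact ha ((Module.forall_dual_apply_eq_zero_iff L a).mp h)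

lemma exists_eval_ne_zero_of_notMem [IsAlgClosed L] [Finite σ] {P : Ideal (MvPolynomial σ L)}
    [hP : P.IsPrime] {f : MvPolynomial σ L} (hf : f ∉ P) :
    ∃ v : σ → L, (∀ g ∈ P, eval v g = 0) ∧ eval v f ≠ 0 := by
  by_contra! h
  refine hf ?_
  rw [← hP.radical, ← vanishingIdeal_zeroLocus_eq_radical (k := L) (K := L) P]
  exact mem_vanishingIdeal_iff.mpr fun v hv => h v hv

section ExtendedPrime

variable (P : Ideal (MvPolynomial σ L))

lemma eval_algebraMap_eq_zero_of_mem_map {v : σ → L} (hv : ∀ g ∈ P, eval v g = 0)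
    {f : MvPolynomial σ Ω} (hf : f ∈ P.map (map (algebraMap L Ω))) :
    eval (algebraMap L Ω ∘ v) f = 0 := by
  by_contra h
  obtain ⟨φ, hφ⟩ := exists_functional_ne_zero (L := L) h
  rw [← eval_mapCoeffs] at hφ
  exact hφ (hv _ (mem_map_iff_forall_mapCoeffs_mem.mp hf φ))

variable [Finite σ]

lemma isPrime_map_map_algebraMap [IsAlgClosed L] [hP : P.IsPrime] :
    (P.map (map (algebraMap L Ω))).IsPrime := by
  refine ⟨fun htop => ?_, fun {f g} hfg => ?_⟩
  · refine hP.ne_top ?_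
    rw [← comap_map_map_algebraMap (Ω := Ω) P, htop, Ideal.comap_top]
  · by_contra! h
    simp only [mem_map_iff_forall_mapCoeffs_mem, not_forall] at h
    obtain ⟨⟨φ, hφ⟩, ⟨ψ, hψ⟩⟩ := h
    obtain ⟨v, hvP, hv⟩ := exists_eval_ne_zero_of_notMem (hP.mul_notMem hφ hψ)
    have hzero := eval_algebraMap_eq_zero_of_mem_map P hvP hfg
    rw [map_mul, eval_mapCoeffs, eval_mapCoeffs] at hv
    rcases mul_eq_zero.mp (map_mul (eval _) f g ▸ hzero) with h | h <;> simp [h] at hv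

variable {n : ℕ}

lemma le_trdeg_quotient_map [IsAlgClosed L] [P.IsPrime]
    (hn : (n : Cardinal) ≤ Algebra.trdeg L (MvPolynomial σ L ⧸ P)) :
    (n : Cardinal) ≤
      Algebra.trdeg Ω (MvPolynomial σ Ω ⧸ P.map (map (algebraMap L Ω))) := by
  have := isPrime_map_map_algebraMap (Ω := Ω) P
  obtain ⟨J, hJ⟩ := (natCast_le_trdeg_quotient_iff P).mp hn
  refine (natCast_le_trdeg_quotient_iff _).mpr ⟨J, fun q hq => ?_⟩
  by_contra h
  obtain ⟨m, hm⟩ := ne_zero_iff.mp h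
  obtain ⟨φ, hφ⟩ := exists_functional_ne_zero (L := L) hm
  have hq0 := hJ (mapCoeffs φ q)
    (mapCoeffs_rename φ J q ▸ mem_map_iff_forall_mapCoeffs_mem.mp hq φ)
  exact hφ (by rw [← coeff_mapCoeffs, hq0, coeff_zero])

lemma le_trdeg_quotient_of_map_le [P.IsPrime] {Q : Ideal (MvPolynomial σ Ω)} [Q.IsPrime]
    (h : P.map (map (algebraMap L Ω)) ≤ Q)
    (hn : (n : Cardinal) ≤ Algebra.trdeg Ω (MvPolynomial σ Ω ⧸ Q)) :
    (n : Cardinal) ≤ Algebra.trdeg L (MvPolynomial σ L ⧸ P) := by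
  obtain ⟨J, hJ⟩ := (natCast_le_trdeg_quotient_iff Q).mp hn
  refine (natCast_le_trdeg_quotient_iff P).mpr ⟨J, fun q hq => ?_⟩
  refine (map_eq_zero_iff _ (map_injective (algebraMap L Ω) (algebraMap L Ω).injective)).mp ?_
  exact hJ _ (map_rename (algebraMap L Ω) J q ▸ h (Ideal.mem_map_of_mem _ hq))

end ExtendedPrime

end BaseChange

section Ultrapower

open MvPolynomial

variable {I K Ω σ : Type*} [Field K] [Field Ω] [Algebra K Ω]

/-- `π` exhibits the field `Ω` as the ultrapower of `K` along the ultrafilter `U`: it is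
surjective and kills exactly the families that vanish `U`-almost everywhere. -/
structure IsUltrapowerMap (U : Ultrafilter I) (π : (I → K) →ₐ[K] Ω) : Prop where
  surjective : Function.Surjective π
  map_eq_zero_iff (f : I → K) : π f = 0 ↔ ∀ᶠ i in U, f i = 0

lemma polynomial_eval_pi_apply (i : I) (q : Polynomial (I → K)) (z : I → K) :
    q.eval z i = (q.map (Pi.evalRingHom (fun _ => K) i)).eval (z i) := by
  rw [Polynomial.eval_map]
  exact (Polynomial.eval₂_at_apply (Pi.evalRingHom (fun _ => K) i) z).symm

lemma isAlgClosed_of_surjective_pi [IsAlgClosed K] {π : (I → K) →ₐ[K] Ω}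
    (hπ : Function.Surjective π) : IsAlgClosed Ω := by
  refine IsAlgClosed.of_exists_root Ω fun p hp hirr => ?_
  obtain ⟨q, rfl, hdeg, hq⟩ := Polynomial.lifts_and_natDegree_eq_and_monic
    (f := (π : (I → K) →+* Ω)) ((Polynomial.mem_lifts _).mpr (Polynomial.map_surjective _ hπ p)) hp
  have hroot (i : I) : ∃ z, (q.map (Pi.evalRingHom (fun _ => K) i)).IsRoot z :=
    IsAlgClosed.exists_root _ <| by
      rw [hq.degree_map, Polynomial.degree_eq_natDegree (hq.ne_zero_of_ne ?_), hdeg]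
      · exact_mod_cast hirr.natDegree_pos.ne'
      · exact fun h => one_ne_zero (α := K) (congrFun h.symm i)
  choose z hz using hroot
  have hqz : q.eval z = 0 := _root_.funext fun i =>
    (polynomial_eval_pi_apply i q z).trans (hz i)
  refine ⟨π z, ?_⟩
  rw [Polynomial.eval_map]
  exact (Polynomial.eval₂_at_apply (π : (I → K) →+* Ω) z).trans (by rw [hqz, map_zero])

/-- The member at the index `i` of a family of polynomials with uniformly bounded supports, which
is encoded as a polynomial with coefficients in `I → K`. -/
noncomputable def evalIndex (i : I) : MvPolynomial σ (I → K) →+* MvPolynomial σ K :=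
  map (Pi.evalRingHom (fun _ => K) i)

/-- The polynomial over `Ω` represented by a family of polynomials with uniformly bounded
supports. -/
noncomputable def toUltra (π : (I → K) →ₐ[K] Ω) : MvPolynomial σ (I → K) →+* MvPolynomial σ Ω :=
  map (π : (I → K) →+* Ω)

/-- The ultraproduct of a family of ideals. -/
noncomputable def ultraIdeal (U : Ultrafilter I) (π : (I → K) →ₐ[K] Ω)
    (p : I → Ideal (MvPolynomial σ K)) : Ideal (MvPolynomial σ Ω) :=
  Ideal.map (toUltra π)
    { carrier := {F | ∀ᶠ i in U, evalIndex i F ∈ p i}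
      add_mem' := fun {F G} hF hG => by
        filter_upwards [hF, hG] with i hi hi'
        exact map_add (evalIndex i) F G ▸ add_mem hi hi'
      zero_mem' := .of_forall fun i => by simp only [map_zero, zero_mem]
      smul_mem' := fun F G hG => by
        filter_upwards [hG] with i hi
        exact map_mul (evalIndex i) F G ▸ Ideal.mul_mem_left _ _ hi }

lemma coeff_evalIndex (i : I) (m : σ →₀ ℕ) (F : MvPolynomial σ (I → K)) :
    coeff m (evalIndex i F) = coeff m F i :=
  coeff_map _ _ _

lemma rename_evalIndex {τ : Type*} (J : τ → σ) (i : I) (F : MvPolynomial τ (I → K)) :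
    rename J (evalIndex i F) = evalIndex i (rename J F) :=
  (map_rename _ _ _).symm

section

variable {π : (I → K) →ₐ[K] Ω}

lemma coeff_toUltra (m : σ →₀ ℕ) (F : MvPolynomial σ (I → K)) :
    coeff m (toUltra π F) = π (coeff m F) :=
  coeff_map _ _ _

lemma rename_toUltra {τ : Type*} (J : τ → σ) (F : MvPolynomial τ (I → K)) :
    rename J (toUltra π F) = toUltra π (rename J F) :=
  (map_rename _ _ _).symm

lemma eval_toUltra (F : MvPolynomial σ (I → K)) (v : σ → I → K) :
    eval (fun s => π (v s)) (toUltra π F) =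
      π (fun i => eval (fun s => v s i) (evalIndex i F)) := by
  have hfamily : (fun i => eval (fun s => v s i) (evalIndex i F)) = eval v F :=
    _root_.funext fun i => (eval_map _ _ _).trans
      (eval₂_comp (Pi.evalRingHom (fun _ => K) i) v F).symm
  rw [hfamily, toUltra, eval_map]
  exact (eval₂_comp (π : (I → K) →+* Ω) v F).symm

end

namespace IsUltrapowerMap

variable {U : Ultrafilter I} {π : (I → K) →ₐ[K] Ω}

lemma toUltra_surjective (hπ : IsUltrapowerMap U π) : Function.Surjective (toUltra (σ := σ) π) :=
  map_surjective _ hπ.surjective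

lemma toUltra_eq_zero_iff (hπ : IsUltrapowerMap U π) {F : MvPolynomial σ (I → K)} :
    toUltra π F = 0 ↔ ∀ᶠ i in U, evalIndex i F = 0 := by
  simp only [MvPolynomial.ext_iff, coeff_toUltra, coeff_evalIndex, coeff_zero,
    hπ.map_eq_zero_iff]
  refine ⟨fun h => ?_, fun h m => h.mono fun i hi => hi m⟩
  filter_upwards [(Filter.eventually_all_finset F.support).mpr fun m _ => h m] with i hi m
  by_cases hm : m ∈ F.support
  · exact hi m hm
  · rw [notMem_support_iff.mp hm, Pi.zero_apply]

variable {p : I → Ideal (MvPolynomial σ K)}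

lemma toUltra_mem_ultraIdeal_iff (hπ : IsUltrapowerMap U π) {F : MvPolynomial σ (I → K)} :
    toUltra π F ∈ ultraIdeal U π p ↔ ∀ᶠ i in U, evalIndex i F ∈ p i := by
  rw [ultraIdeal, Ideal.mem_map_iff_of_surjective _ hπ.toUltra_surjective]
  refine ⟨fun ⟨G, hG, hGF⟩ => ?_, fun h => ⟨F, h, rfl⟩⟩
  have hsub : ∀ᶠ i in U, evalIndex i (G - F) = 0 :=
    hπ.toUltra_eq_zero_iff.mp (by rw [map_sub, hGF, sub_self])
  filter_upwards [hG, hsub] with i hGi hi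
  rw [map_sub, sub_eq_zero] at hi
  exact hi ▸ hGi

lemma isPrime_ultraIdeal (hπ : IsUltrapowerMap U π) (hp : ∀ i, (p i).IsPrime) :
    (ultraIdeal U π p).IsPrime := by
  refine ⟨fun htop => ?_, fun {x y} => ?_⟩
  · rw [Ideal.eq_top_iff_one, ← map_one (toUltra π), hπ.toUltra_mem_ultraIdeal_iff] at htop
    obtain ⟨i, hi⟩ := htop.exists
    exact (hp i).one_notMem (map_one (evalIndex (K := K) i) ▸ hi)
  · obtain ⟨F, rfl⟩ := hπ.toUltra_surjective x
    obtain ⟨G, rfl⟩ := hπ.toUltra_surjective y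
    simp only [← map_mul, hπ.toUltra_mem_ultraIdeal_iff, ← Ultrafilter.eventually_or]
    intro h
    filter_upwards [h] with i hi
    exact (hp i).mem_or_mem (map_mul (evalIndex i) F G ▸ hi)

lemma le_trdeg_quotient_ultraIdeal [Finite σ] (hπ : IsUltrapowerMap U π)
    (hp : ∀ i, (p i).IsPrime) {n : ℕ}
    (hn : ∀ i, (n : Cardinal) ≤ Algebra.trdeg K (MvPolynomial σ K ⧸ p i)) :
    (n : Cardinal) ≤ Algebra.trdeg Ω (MvPolynomial σ Ω ⧸ ultraIdeal U π p) := by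
  have := hπ.isPrime_ultraIdeal hp
  choose J hJ using fun i => (natCast_le_trdeg_quotient_iff (p i)).mp (hn i)
  obtain ⟨J₀, hJ₀⟩ := U.eventually_exists_iff.mp (.of_forall fun i => (⟨J i, rfl⟩ : ∃ t, J i = t))
  refine (natCast_le_trdeg_quotient_iff _).mpr ⟨J₀, fun q hq => ?_⟩
  obtain ⟨Q, rfl⟩ := hπ.toUltra_surjective q
  rw [rename_toUltra, hπ.toUltra_mem_ultraIdeal_iff] at hq
  rw [hπ.toUltra_eq_zero_iff]
  filter_upwards [hq, hJ₀] with i hi hJi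
  exact hJ i _ (by rwa [hJi, rename_evalIndex])

end IsUltrapowerMap

end Ultrapower

section LinearSections

open MvPolynomial

variable {k σ : Type*} [Field k]

lemma exists_X_notMem_of_one_le_trdeg_quotient [Finite σ] (P : Ideal (MvPolynomial σ k))
    [P.IsPrime] (h : ((1 : ℕ) : Cardinal) ≤ Algebra.trdeg k (MvPolynomial σ k ⧸ P)) :
    ∃ c, X c ∉ P := by
  obtain ⟨J, hJ⟩ := (natCast_le_trdeg_quotient_iff P).mp h
  exact ⟨J 0, fun hX => X_ne_zero (R := k) 0 (hJ (X 0) (by rwa [rename_X]))⟩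

/-- The linear form with a given coefficient vector. -/
noncomputable def linearForm [Fintype σ] : (σ → k) →ₗ[k] MvPolynomial σ k :=
  Fintype.linearCombination k X

lemma linearForm_apply [Fintype σ] (w : σ → k) : linearForm w = ∑ c, C (w c) * X c := by
  simp only [linearForm, Fintype.linearCombination_apply, smul_eq_C_mul]

lemma eval_linearForm [Fintype σ] (w v : σ → k) : eval v (linearForm w) = ∑ c, w c * v c := by
  simp only [linearForm_apply, map_sum, map_mul, eval_C, eval_X]

lemma isHomogeneous_linearForm [Fintype σ] (w : σ → k) : (linearForm w).IsHomogeneous 1 := by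
  rw [linearForm_apply]
  exact IsHomogeneous.sum _ _ _ fun c _ => isHomogeneous_C_mul_X (w c) c

lemma exists_linearForm_forall_notMem [Fintype σ] [Infinite k]
    {S : Set (Ideal (MvPolynomial σ k))} (hS : S.Finite) (hX : ∀ q ∈ S, ∃ c, X c ∉ q) :
    ∃ w, ∀ q ∈ S, linearForm w ∉ q := by
  classical
  have := hS.to_subtype
  let W (q : S) : Submodule k (σ → k) := (q.1.restrictScalars k).comap linearForm
  by_contra! hcover
  have hunion : ⋃ q, (W q : Set (σ → k)) = Set.univ := Set.eq_univ_of_forall fun w =>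
    have ⟨q, hq, hwq⟩ := hcover w
    Set.mem_iUnion.mpr ⟨⟨q, hq⟩, hwq⟩
  obtain ⟨q, hq⟩ := Subspace.exists_eq_top_of_iUnion_eq_univ hunion
  obtain ⟨c, hc⟩ := hX q q.2
  have hmem : linearForm (Pi.single c 1) ∈ q.1 := hq.ge (Submodule.mem_top (x := Pi.single c 1))
  rw [linearForm, Fintype.linearCombination_apply_single, one_smul] at hmem
  exact hc hmem

lemma exists_linearForms_trdeg_quotient_lt_one [Fintype σ] [Infinite k] {N : ℕ}
    {I : Ideal (MvPolynomial σ k)}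
    (h : ∀ Q : Ideal (MvPolynomial σ k), Q.IsPrime → I ≤ Q →
      Algebra.trdeg k (MvPolynomial σ k ⧸ Q) < ((N + 1 : ℕ) : Cardinal)) :
    ∃ l : Fin N → σ → k, ∀ Q : Ideal (MvPolynomial σ k), Q.IsPrime → I ≤ Q →
      (∀ t, linearForm (l t) ∈ Q) →
        Algebra.trdeg k (MvPolynomial σ k ⧸ Q) < ((1 : ℕ) : Cardinal) := by
  induction N generalizing I with
  | zero => exact ⟨Fin.elim0, fun Q hQ hI _ => h Q hQ hI⟩
  | succ N ih =>
    obtain ⟨w, hw⟩ := exists_linearForm_forall_notMem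
      (S := {q ∈ I.minimalPrimes | ((1 : ℕ) : Cardinal) ≤ Algebra.trdeg k (MvPolynomial σ k ⧸ q)})
      ((Ideal.finite_minimalPrimes_of_isNoetherianRing _ I).subset fun q hq => hq.1)
      fun q hq => have := hq.1.1.1; exists_X_notMem_of_one_le_trdeg_quotient q hq.2
    have hdrop : ∀ Q : Ideal (MvPolynomial σ k), Q.IsPrime → I ⊔ Ideal.span {linearForm w} ≤ Q →
        Algebra.trdeg k (MvPolynomial σ k ⧸ Q) < ((N + 1 : ℕ) : Cardinal) := by
      intro Q hQ hIQ
      obtain ⟨hIQ, hwQ⟩ := sup_le_iff.mp hIQ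
      obtain ⟨q, hq, hqQ⟩ := Ideal.exists_minimalPrimes_le hIQ
      have := hq.1.1
      by_contra! htr
      have hone : ((1 : ℕ) : Cardinal) ≤ Algebra.trdeg k (MvPolynomial σ k ⧸ q) :=
        (Nat.cast_le.mpr (by lia)).trans (htr.trans (trdeg_quotient_anti hqQ))
      have hlt : q < Q := lt_of_le_of_ne hqQ fun heq =>
        hw q ⟨hq, hone⟩ (heq ▸ (Ideal.span_singleton_le_iff_mem Q).mp hwQ)
      exact (h q hq.1.1 hq.1.2).not_ge (add_one_le_trdeg_quotient_of_lt hlt htr)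
    obtain ⟨l, hl⟩ := ih hdrop
    refine ⟨Fin.cons w l, fun Q hQ hIQ hlQ => hl Q hQ (sup_le hIQ ?_) fun t => ?_⟩
    · exact (Ideal.span_singleton_le_iff_mem Q).mpr (hlQ 0)
    · exact hlQ t.succ

/-- Restriction of polynomials to the line through the origin spanned by `v`. -/
noncomputable def restrictToLine (v : σ → k) : MvPolynomial σ k →ₐ[k] Polynomial k :=
  aeval fun c => Polynomial.C (v c) * Polynomial.X

lemma restrictToLine_of_isHomogeneous (v : σ → k) {F : MvPolynomial σ k} {d : ℕ}
    (hF : F.IsHomogeneous d) :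
    restrictToLine v F = Polynomial.C (eval v F) * Polynomial.X ^ d := by
  rw [restrictToLine, aeval_def, eval₂_eq, eval_eq, map_sum, Finset.sum_mul]
  refine Finset.sum_congr rfl fun m hm => ?_
  have hdeg : ∑ c ∈ m.support, m c = d := by
    rw [← Finsupp.degree_apply, Finsupp.degree_eq_weight_one]
    exact hF (mem_support_iff.mp hm)
  simp only [Polynomial.algebraMap_eq, mul_pow, Finset.prod_mul_distrib,
    Finset.prod_pow_eq_pow_sum, hdeg, map_mul, map_prod, map_pow, mul_assoc]

lemma eval_zero_restrictToLine (v : σ → k) (F : MvPolynomial σ k) :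
    Polynomial.aeval (0 : k) (restrictToLine v F) = aeval (0 : σ → k) F := by
  refine DFunLike.congr_fun (?_ : (Polynomial.aeval (0 : k)).comp (restrictToLine v) = aeval 0) F
  ext c
  simp only [restrictToLine, AlgHom.comp_apply, aeval_X, map_mul, Polynomial.aeval_X, mul_zero,
    Pi.zero_apply]

lemma one_le_trdeg_quotient_ker_restrictToLine {v : σ → k} (hv : v ≠ 0) :
    ((1 : ℕ) : Cardinal) ≤
      Algebra.trdeg k (MvPolynomial σ k ⧸ RingHom.ker (restrictToLine v)) := by
  obtain ⟨c, hc⟩ := Function.ne_iff.mp hv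
  have hle : RingHom.ker (restrictToLine v) ≤ RingHom.ker (aeval (R := k) (0 : σ → k)) :=
    fun F hF => by
      rw [RingHom.mem_ker] at hF ⊢
      rw [← eval_zero_restrictToLine v, hF, map_zero]
  have hlt : RingHom.ker (restrictToLine v) < RingHom.ker (aeval (R := k) (0 : σ → k)) := by
    refine SetLike.lt_iff_le_and_exists.mpr ⟨hle, X c, ?_, ?_⟩
    · rw [RingHom.mem_ker, aeval_X, Pi.zero_apply]
    · rw [RingHom.mem_ker, restrictToLine, aeval_X]
      exact mul_ne_zero (Polynomial.C_ne_zero.mpr hc) Polynomial.X_ne_zero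
  have := RingHom.ker_isPrime (restrictToLine v)
  have := RingHom.ker_isPrime (aeval (R := k) (0 : σ → k))
  exact add_one_le_trdeg_quotient_of_lt hlt (by rw [Nat.cast_zero]; exact zero_le)

lemma exists_linearForms_eq_zero_of_eval_eq_zero [Fintype σ] [Infinite k] {ι : Type*}
    {F : ι → MvPolynomial σ k} {d : ι → ℕ} (hF : ∀ j, (F j).IsHomogeneous (d j)) {N : ℕ}
    (h : ∀ Q : Ideal (MvPolynomial σ k), Q.IsPrime → (∀ j, F j ∈ Q) →
      Algebra.trdeg k (MvPolynomial σ k ⧸ Q) < ((N + 1 : ℕ) : Cardinal)) :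
    ∃ l : Fin N → σ → k, ∀ v, (∀ j, eval v (F j) = 0) → (∀ t, eval v (linearForm (l t)) = 0) →
      v = 0 := by
  obtain ⟨l, hl⟩ := exists_linearForms_trdeg_quotient_lt_one (I := Ideal.span (Set.range F))
    fun Q hQ hle => h Q hQ fun j => hle (Ideal.subset_span ⟨j, rfl⟩)
  refine ⟨l, fun v hFv hlv => ?_⟩
  have hker {G : MvPolynomial σ k} {e : ℕ} (hG : G.IsHomogeneous e) (hGv : eval v G = 0) :
      G ∈ RingHom.ker (restrictToLine v) := by
    rw [RingHom.mem_ker, restrictToLine_of_isHomogeneous v hG, hGv, map_zero, zero_mul]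
  by_contra hv
  refine (hl _ (RingHom.ker_isPrime _) (Ideal.span_le.mpr ?_)
    fun t => hker (isHomogeneous_linearForm _) (hlv t)).not_ge
      (one_le_trdeg_quotient_ker_restrictToLine hv)
  rintro _ ⟨j, rfl⟩
  exact hker (hF j) (hFv j)

lemma exists_isPrime_forall_mem_le_trdeg_quotient {R : Type*} [CommRing R] [Algebra k R]
    [Algebra.FiniteType k R] {e n : ℕ} {P M : Ideal R} [P.IsPrime] [M.IsPrime] (hPM : P ≤ M)
    {f : Fin n → R} (hf : ∀ t, f t ∈ M)
    (h : ((e + n : ℕ) : Cardinal) ≤ Algebra.trdeg k (R ⧸ P)) :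
    ∃ Q : Ideal R, Q.IsPrime ∧ P ≤ Q ∧ (∀ t, f t ∈ Q) ∧
      (e : Cardinal) ≤ Algebra.trdeg k (R ⧸ Q) := by
  induction n generalizing P with
  | zero => exact ⟨P, ‹_›, le_rfl, fun t => t.elim0, h⟩
  | succ n ih =>
    obtain ⟨Q, hQ, hPQ, hQM, hfQ, htr⟩ :=
      exists_isPrime_between_mem_le_trdeg_quotient (k := k) hPM (hf 0)
    obtain ⟨Q', hQ', hQQ', hfQ', htr'⟩ := ih hQM (fun t => hf t.succ) (htr _ h)
    exact ⟨Q', hQ', hPQ.trans hQQ', Fin.cases (hQQ' hfQ) hfQ', htr'⟩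

lemma trdeg_quotient_lt_of_linearForms [Fintype σ] [IsAlgClosed k] {ι : Type*}
    {F : ι → MvPolynomial σ k} {N : ℕ} {l : Fin N → σ → k}
    (hl : ∀ v, (∀ j, eval v (F j) = 0) → (∀ t, eval v (linearForm (l t)) = 0) → v = 0)
    {Q : Ideal (MvPolynomial σ k)} [Q.IsPrime] (hQ : ∀ f ∈ Q, eval 0 f = 0)
    (hFQ : ∀ j, F j ∈ Q) :
    Algebra.trdeg k (MvPolynomial σ k ⧸ Q) < ((N + 1 : ℕ) : Cardinal) := by
  have := RingHom.ker_isPrime (eval (0 : σ → k))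
  have hlM (t) : linearForm (l t) ∈ RingHom.ker (eval (0 : σ → k)) := by
    simp only [RingHom.mem_ker, eval_linearForm, Pi.zero_apply, mul_zero, Finset.sum_const_zero]
  by_contra! htr
  obtain ⟨Q', hQ', hle, hlQ', htr'⟩ := exists_isPrime_forall_mem_le_trdeg_quotient (k := k)
    (e := 1) (P := Q) (M := RingHom.ker (eval 0)) hQ hlM (by rwa [add_comm])
  obtain ⟨c, hc⟩ := exists_X_notMem_of_one_le_trdeg_quotient Q' htr'
  obtain ⟨v, hv, hvc⟩ := exists_eval_ne_zero_of_notMem hc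
  refine hvc ?_
  rw [hl v (fun j => hv _ (hle (hFQ j))) fun t => hv _ (hlQ' t), eval_X, Pi.zero_apply]

end LinearSections

section SpanCoordinates

open MvPolynomial

variable {k σ : Type*} [Field k] {n : ℕ}

/-- The `X (J j)` are coordinates on the linear span of the zero locus of `P`: modulo `P` they are
linearly independent, and each `X c` is the linear form in them with coefficients `A c`. -/
structure IsSpanCoordinates (P : Ideal (MvPolynomial σ k)) (J : Fin n → σ) (A : σ → Fin n → k) :
    Prop where
  eq_zero_of_mem (e : Fin n → k) : ∑ j, C (e j) * X (J j) ∈ P → e = 0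
  X_sub_mem (c : σ) : X c - ∑ j, C (A c j) * X (J j) ∈ P

lemma linearIndependent_mk_X_iff (P : Ideal (MvPolynomial σ k)) (J : Fin n → σ) :
    LinearIndependent k (fun j => Ideal.Quotient.mk P (X (J j))) ↔
      ∀ e : Fin n → k, ∑ j, C (e j) * X (J j) ∈ P → e = 0 := by
  have hmk (e : Fin n → k) : ∑ j, e j • Ideal.Quotient.mk P (X (J j)) =
      Ideal.Quotient.mk P (∑ j, C (e j) * X (J j)) := by
    simp only [map_sum, ← smul_eq_C_mul]
    rfl
  simp only [Fintype.linearIndependent_iff, hmk, Ideal.Quotient.eq_zero_iff_mem, funext_iff,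
    Pi.zero_apply]

lemma finrank_span_range_mk_X [Finite σ] {P : Ideal (MvPolynomial σ k)}
    {Λ : Submodule k (σ → k)}
    (hP : ∀ f : MvPolynomial σ k, f.IsHomogeneous 1 → (f ∈ P ↔ ∀ v ∈ Λ, eval v f = 0)) :
    Module.finrank k (Submodule.span k (Set.range fun c => Ideal.Quotient.mk P (X c))) =
      Module.finrank k Λ := by
  classical
  have := Fintype.ofFinite σ
  let restrict : (σ → k) →ₗ[k] MvPolynomial σ k ⧸ P :=
    (Ideal.Quotient.mkₐ k P).toLinearMap ∘ₗ linearForm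
  have hrange : LinearMap.range restrict =
      Submodule.span k (Set.range fun c => Ideal.Quotient.mk P (X c)) := by
    rw [LinearMap.range_comp, linearForm, Fintype.range_linearCombination, Submodule.map_span,
      ← Set.range_comp]
    rfl
  have hker : LinearMap.ker restrict =
      Λ.dualAnnihilator.map (Module.piEquiv σ k k).symm.toLinearMap := by
    rw [← Submodule.comap_equiv_eq_map_symm]
    ext w
    rw [LinearMap.mem_ker, Submodule.mem_comap, Submodule.mem_dualAnnihilator]
    refine Ideal.Quotient.eq_zero_iff_mem.trans ((hP _ (isHomogeneous_linearForm w)).trans ?_)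
    simp only [eval_linearForm, LinearEquiv.coe_coe, Module.piEquiv_apply_apply, smul_eq_mul,
      mul_comm]
  have hrank := LinearMap.finrank_range_add_finrank_ker restrict
  have hann := Subspace.finrank_add_finrank_dualAnnihilator_eq Λ
  rw [hrange, hker, LinearEquiv.finrank_map_eq, ← hann] at hrank
  exact Nat.add_right_cancel hrank

lemma exists_isSpanCoordinates [Finite σ] {P : Ideal (MvPolynomial σ k)}
    {Λ : Submodule k (σ → k)} (hΛ : Module.finrank k Λ = n)
    (hP : ∀ f : MvPolynomial σ k, f.IsHomogeneous 1 → (f ∈ P ↔ ∀ v ∈ Λ, eval v f = 0)) :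
    ∃ (J : Fin n → σ) (A : σ → Fin n → k), IsSpanCoordinates P J A := by
  obtain rfl : Module.finrank k (Submodule.span k
    (Set.range fun c => Ideal.Quotient.mk P (X c))) = n := (finrank_span_range_mk_X hP).trans hΛ
  have := Module.Finite.span_of_finite k (Set.finite_range fun c => Ideal.Quotient.mk P (X c))
  obtain ⟨x, hx, hspan, hli⟩ := Submodule.exists_fun_fin_finrank_span_eq k
    (Set.range fun c => Ideal.Quotient.mk P (X c))
  choose J hJ using hx
  obtain rfl : (fun j => Ideal.Quotient.mk P (X (J j))) = x := _root_.funext hJ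
  have hcoord (c : σ) : ∃ a : Fin _ → k,
      ∑ j, a j • Ideal.Quotient.mk P (X (J j)) = Ideal.Quotient.mk P (X c) := by
    rw [← Submodule.mem_span_range_iff_exists_fun, hspan]
    exact Submodule.subset_span ⟨c, rfl⟩
  choose A hA using hcoord
  refine ⟨J, A, (linearIndependent_mk_X_iff P J).mp hli, fun c => ?_⟩
  rw [← Ideal.Quotient.eq, ← hA c]
  simp only [map_sum, ← smul_eq_C_mul]
  rfl

end SpanCoordinates

section UltrapowerOfForms

open MvPolynomial

variable {I K Ω σ : Type*} [Field K] [Field Ω] [Algebra K Ω]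

lemma mem_finsuppAntidiag_univ_iff [Fintype σ] [DecidableEq σ] {d : ℕ} {m : σ →₀ ℕ} :
    m ∈ Finset.finsuppAntidiag Finset.univ d ↔ m.degree = d := by
  rw [Finset.mem_finsuppAntidiag, Finsupp.degree_eq_sum, and_iff_left (Finset.subset_univ _)]

lemma exists_evalIndex_eq_of_isHomogeneous [Finite σ] {d : ℕ} {G : I → MvPolynomial σ K}
    (hG : ∀ i, (G i).IsHomogeneous d) :
    ∃ F : MvPolynomial σ (I → K), F.IsHomogeneous d ∧ ∀ i, evalIndex i F = G i := by
  classical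
  have := Fintype.ofFinite σ
  refine ⟨∑ m ∈ Finset.finsuppAntidiag Finset.univ d, monomial m fun i => coeff m (G i),
    IsHomogeneous.sum _ _ _ fun m hm =>
      isHomogeneous_monomial _ (mem_finsuppAntidiag_univ_iff.mp hm), fun i => ?_⟩
  ext m
  rw [coeff_evalIndex, coeff_sum]
  simp only [coeff_monomial, Finset.sum_ite_eq', mem_finsuppAntidiag_univ_iff]
  split_ifs with h
  · rfl
  · exact ((hG i).coeff_eq_zero h).symm

namespace IsUltrapowerMap

variable {U : Ultrafilter I} {π : (I → K) →ₐ[K] Ω}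
  {p : I → Ideal (MvPolynomial σ K)}

lemma exists_isSpanCoordinates_ultraIdeal [Finite σ] (hπ : IsUltrapowerMap U π) {n : ℕ}
    (hp : ∀ i, ∃ (J : Fin n → σ) (A : σ → Fin n → K), IsSpanCoordinates (p i) J A) :
    ∃ (J : Fin n → σ) (A : σ → Fin n → Ω), IsSpanCoordinates (ultraIdeal U π p) J A := by
  choose J A hJA using hp
  obtain ⟨J₀, hJ₀⟩ := U.eventually_exists_iff.mp (.of_forall fun i => (⟨J i, rfl⟩ : ∃ t, J i = t))
  refine ⟨J₀, fun c j => π fun i => A i c j, fun e he => ?_, fun c => ?_⟩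
  · choose e' he' using fun j => hπ.surjective (e j)
    have hlift : ∑ j, C (e j) * X (J₀ j) = toUltra π (∑ j, C (e' j) * X (J₀ j)) := by
      simp only [toUltra, map_sum, map_mul, map_C, map_X, RingHom.coe_coe, he']
    rw [hlift, hπ.toUltra_mem_ultraIdeal_iff] at he
    refine _root_.funext fun j => ?_
    rw [← he', Pi.zero_apply, hπ.map_eq_zero_iff]
    filter_upwards [hJ₀, he] with i hi hei
    simp only [evalIndex, map_sum, map_mul, map_C, map_X, Pi.evalRingHom_apply, ← hi] at hei
    exact congrFun ((hJA i).eq_zero_of_mem _ hei) j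
  · have hlift : X c - ∑ j, C (π fun i => A i c j) * X (J₀ j) =
        toUltra π (X c - ∑ j, C (fun i => A i c j) * X (J₀ j)) := by
      simp only [toUltra, map_sub, map_sum, map_mul, map_C, map_X, RingHom.coe_coe]
    rw [hlift, hπ.toUltra_mem_ultraIdeal_iff]
    filter_upwards [hJ₀] with i hi
    simp only [evalIndex, map_sub, map_sum, map_mul, map_C, map_X, Pi.evalRingHom_apply, ← hi]
    exact (hJA i).X_sub_mem c

lemma eval_zero_eq_zero_of_mem_ultraIdeal (hπ : IsUltrapowerMap U π)
    (hp : ∀ i, ∀ f ∈ p i, eval 0 f = 0)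
    {f : MvPolynomial σ Ω} (hf : f ∈ ultraIdeal U π p) : eval 0 f = 0 := by
  obtain ⟨F, rfl⟩ := hπ.toUltra_surjective f
  rw [hπ.toUltra_mem_ultraIdeal_iff] at hf
  have hzero : (0 : σ → Ω) = fun _ => π 0 := _root_.funext fun _ => (map_zero π).symm
  rw [hzero, eval_toUltra (v := fun _ => 0), hπ.map_eq_zero_iff]
  filter_upwards [hf] with i hi
  exact hp i _ hi

/-- Over `K` the bound is witnessed by finitely many linear forms that, together with the `F j`,
have only the trivial common zero; this persists in the ultrapower. -/
lemma trdeg_quotient_lt [Finite σ] [IsAlgClosed K] (hπ : IsUltrapowerMap U π) {ι : Type*}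
    [Finite ι] {F : ι → MvPolynomial σ (I → K)} {d : ι → ℕ}
    (hF : ∀ i j, (evalIndex i (F j)).IsHomogeneous (d j)) {N : ℕ}
    (hN : ∀ i, ∀ Q : Ideal (MvPolynomial σ K), Q.IsPrime → (∀ j, evalIndex i (F j) ∈ Q) →
      Algebra.trdeg K (MvPolynomial σ K ⧸ Q) < ((N + 1 : ℕ) : Cardinal))
    {Q : Ideal (MvPolynomial σ Ω)} [Q.IsPrime] (hQ : ∀ f ∈ Q, eval 0 f = 0)
    (hFQ : ∀ j, toUltra π (F j) ∈ Q) :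
    Algebra.trdeg Ω (MvPolynomial σ Ω ⧸ Q) < ((N + 1 : ℕ) : Cardinal) := by
  have := Fintype.ofFinite σ
  have := isAlgClosed_of_surjective_pi hπ.surjective
  choose l hl using fun i => exists_linearForms_eq_zero_of_eval_eq_zero (hF i) (hN i)
  refine trdeg_quotient_lt_of_linearForms (l := fun t c => π fun i => l i t c)
    (fun v hFv hlv => ?_) hQ hFQ
  choose v' hv' using fun c => hπ.surjective (v c)
  obtain rfl : (fun c => π (v' c)) = v := _root_.funext hv'
  simp only [eval_toUltra, hπ.map_eq_zero_iff] at hFv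
  simp only [eval_linearForm, ← map_mul, ← map_sum, hπ.map_eq_zero_iff] at hlv
  refine _root_.funext fun c => (hπ.map_eq_zero_iff _).mpr ?_
  filter_upwards [Filter.eventually_all.mpr hFv, Filter.eventually_all.mpr hlv] with i hFi hli
  refine congrFun (hl i (fun s => v' s i) hFi fun t => ?_) c
  simpa only [eval_linearForm, Finset.sum_apply, Pi.mul_apply] using hli t

end IsUltrapowerMap

end UltrapowerOfForms

section AlgClosureAdjoin

open IntermediateField

variable (K : Type*) {Ω : Type*} [Field K] [Field Ω] [Algebra K Ω]

/-- The relative algebraic closure of `K(T)` in `Ω`, as an extension of `K`: its elements are those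
determined up to finitely many choices by the parameters in `T`. -/
noncomputable def algClosureAdjoin (T : Set Ω) : IntermediateField K Ω :=
  (algebraicClosure (adjoin K T) Ω).restrictScalars K

variable {K}

lemma mem_algClosureAdjoin {T : Set Ω} {x : Ω} :
    x ∈ algClosureAdjoin K T ↔ IsAlgebraic (Algebra.adjoin K T) x := by
  rw [algClosureAdjoin, mem_restrictScalars, mem_algebraicClosure_iff, isAlgebraic_adjoin_iff]

lemma subset_algClosureAdjoin (T : Set Ω) : T ⊆ algClosureAdjoin K T := fun x hx =>
  mem_algClosureAdjoin.mpr
    (isAlgebraic_algebraMap (⟨x, Algebra.subset_adjoin hx⟩ : Algebra.adjoin K T))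

lemma algClosureAdjoin_mono {T T' : Set Ω} (h : T ⊆ T') :
    algClosureAdjoin K T ≤ algClosureAdjoin K T' := fun x hx => by
  rw [mem_algClosureAdjoin] at hx ⊢
  let := (Subalgebra.inclusion (Algebra.adjoin_mono (R := K) h)).toRingHom.toAlgebra
  have : IsScalarTower (Algebra.adjoin K T) (Algebra.adjoin K T') Ω :=
    .of_algebraMap_eq fun _ => rfl
  exact hx.extendScalars (Subalgebra.inclusion_injective _)

instance [IsAlgClosed Ω] (T : Set Ω) : IsAlgClosed (algClosureAdjoin K T) :=
  (algebraicClosure.isAlgClosure (adjoin K T) Ω).isAlgClosed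

lemma card_le_of_algebraicIndependent_algClosureAdjoin {T : Finset Ω} {n : ℕ}
    {x : Fin n → algClosureAdjoin K (T : Set Ω)} (hx : AlgebraicIndependent K x) : n ≤ T.card := by
  have hxΩ : AlgebraicIndependent K fun j => (x j : Ω) :=
    hx.map' (f := (algClosureAdjoin K (T : Set Ω)).val) Subtype.val_injective
  have hclosure : (Set.range fun j => (x j : Ω)) ⊆
      (AlgebraicIndependent.matroid K Ω).closure (T : Set Ω) := by
    rintro _ ⟨j, rfl⟩
    rw [AlgebraicIndependent.matroid_closure_eq]
    exact mem_algClosureAdjoin.mp (x j).2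
  have hindep : (AlgebraicIndependent.matroid K Ω).Indep (Set.range fun j => (x j : Ω)) :=
    AlgebraicIndependent.matroid_indep_iff.mpr hxΩ.coe_range
  have hrank : (Set.range fun j => (x j : Ω)).encard ≤ (T : Set Ω).encard := calc
    _ = (AlgebraicIndependent.matroid K Ω).eRk (Set.range fun j => (x j : Ω)) :=
      hindep.eRk_eq_encard.symm
    _ ≤ (AlgebraicIndependent.matroid K Ω).eRk (T : Set Ω) :=
      (Matroid.eRk_mono _ hclosure).trans_eq (Matroid.eRk_closure_eq _ _)
    _ ≤ (T : Set Ω).encard := Matroid.eRk_le_encard _ _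
  rw [Set.encard_coe_eq_coe_finsetCard, ← Set.image_univ, hxΩ.injective.encard_image,
    Set.encard_univ, ENat.card_eq_coe_fintype_card, Fintype.card_fin] at hrank
  exact_mod_cast hrank

end AlgClosureAdjoin

section HomogeneousForms

open MvPolynomial

variable (k : Type*) [Field k]

lemma card_finsuppAntidiag_univ_fin_succ (r d : ℕ) :
    (Finset.finsuppAntidiag (Finset.univ : Finset (Fin (r + 1))) d).card = (r + d).choose d := by
  rw [Finset.card_finsuppAntidiag_nat_eq_choose, Finset.card_univ, Fintype.card_fin]
  congr 1
  omega

lemma finrank_homogeneousSubmodule (r d : ℕ) :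
    Module.finrank k (homogeneousSubmodule (Fin (r + 1)) k d) = (r + d).choose d := by
  classical
  have hset : {m : Fin (r + 1) →₀ ℕ | m.degree = d} =
      (Finset.finsuppAntidiag Finset.univ d : Finset (Fin (r + 1) →₀ ℕ)) :=
    Set.ext fun m => (mem_finsuppAntidiag_univ_iff (m := m)).symm
  rw [homogeneousSubmodule_eq_finsupp_supported, hset,
    (AddMonoidAlgebra.supportedEquivFinsupp _).finrank_eq, Module.finrank_finsupp_self,
    ← card_finsuppAntidiag_univ_fin_succ]
  exact Fintype.card_coe _

lemma finrank_inf_add_finrank_map {V W : Type*} [AddCommGroup V] [Module k V] [AddCommGroup W]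
    [Module k W] (f : V →ₗ[k] W) (S : Submodule k V) [Module.Finite k S] :
    Module.finrank k ↥(S ⊓ LinearMap.ker f) + Module.finrank k (S.map f) = Module.finrank k S := by
  rw [← Submodule.map_comap_subtype, Submodule.finrank_map_subtype_eq, ← LinearMap.ker_domRestrict,
    ← LinearMap.range_domRestrict, add_comm, LinearMap.finrank_range_add_finrank_ker]

variable {k}

lemma card_coeffs_le {r d : ℕ} {f : MvPolynomial (Fin (r + 1)) k} (hf : f.IsHomogeneous d) :
    f.coeffs.card ≤ (r + d).choose d := by
  classical
  rw [← card_finsuppAntidiag_univ_fin_succ, coeffs]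
  refine Finset.card_image_le.trans (Finset.card_le_card fun m hm => ?_)
  refine mem_finsuppAntidiag_univ_iff.mpr (not_not.mp fun hdeg => ?_)
  exact mem_support_iff.mp hm (hf.coeff_eq_zero hdeg)

end HomogeneousForms

section FieldOfDefinition

open MvPolynomial

variable (L : Type*) {Ω σ : Type*} [Field L] [Field Ω] [Algebra L Ω]

/-- The ideal `Q` is defined over the subfield `L` of `Ω`: it is generated by polynomials with
coefficients in `L`. -/
def IsDefinedOver (Q : Ideal (MvPolynomial σ Ω)) : Prop :=
  (Q.comap (map (algebraMap L Ω))).map (map (algebraMap L Ω)) = Q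

variable {L} {Q : Ideal (MvPolynomial σ Ω)}

lemma isDefinedOver_span {S : Set (MvPolynomial σ Ω)}
    (hS : S ⊆ Set.range (map (algebraMap L Ω))) : IsDefinedOver L (Ideal.span S) := by
  refine le_antisymm Ideal.map_comap_le (Ideal.span_le.mpr fun f hf => ?_)
  obtain ⟨g, rfl⟩ := hS hf
  exact Ideal.mem_map_of_mem _ (Ideal.subset_span hf)

namespace IsDefinedOver

lemma mono {L' : Type*} [Field L'] [Algebra L' Ω] (h : IsDefinedOver L Q)
    (hL : Set.range (algebraMap L Ω) ⊆ Set.range (algebraMap L' Ω)) : IsDefinedOver L' Q := by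
  rw [← h, Ideal.map]
  refine isDefinedOver_span (Set.image_subset_iff.mpr fun g _ => ?_)
  rw [Set.mem_preimage, mem_range_map_iff_coeffs_subset]
  exact ((coe_coeffs_map _ _).trans (Set.image_subset_range _ _)).trans hL

lemma natCast_le_trdeg_quotient_comap_iff [IsAlgClosed L] [Finite σ] [Q.IsPrime]
    (h : IsDefinedOver L Q) {n : ℕ} :
    (n : Cardinal) ≤ Algebra.trdeg L (MvPolynomial σ L ⧸ Q.comap (map (algebraMap L Ω))) ↔
      (n : Cardinal) ≤ Algebra.trdeg Ω (MvPolynomial σ Ω ⧸ Q) := by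
  have : (Q.comap (map (algebraMap L Ω))).IsPrime := Ideal.comap_isPrime _ _
  refine ⟨fun hn => ?_, le_trdeg_quotient_of_map_le _ (le_of_eq h)⟩
  have := le_trdeg_quotient_map (Ω := Ω) _ hn
  rwa [show Ideal.map _ _ = Q from h] at this

end IsDefinedOver

lemma eq_natCast_of_forall_natCast_le_iff {c : Cardinal} {n : ℕ}
    (h : ∀ m : ℕ, (m : Cardinal) ≤ c ↔ m ≤ n) : c = n := by
  refine le_antisymm (Cardinal.lt_natCast_add_one_iff.mp ?_) ((h n).mpr le_rfl)
  exact_mod_cast not_le.mp ((h (n + 1)).not.mpr (by omega))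

/-- The parameters `τ` are the coordinates of `F` in a basis of the forms of degree `d` in `P`. -/
lemma exists_coeff_mem_span_of_mem_map [Finite σ] {P : Ideal (MvPolynomial σ L)}
    {F : MvPolynomial σ Ω} {d : ℕ} (hF : F.IsHomogeneous d)
    (hFP : F ∈ P.map (map (algebraMap L Ω))) :
    ∃ τ : Fin (Module.finrank L ↥(homogeneousSubmodule σ L d ⊓ P.restrictScalars L)) → Ω,
      ∀ m, coeff m F ∈ Submodule.span L (Set.range τ) := by
  let W := homogeneousSubmodule σ L d ⊓ P.restrictScalars L
  have : Module.Finite L (homogeneousSubmodule σ L d) :=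
    Module.Finite.iff_fg.mpr (homogeneousSubmodule_fg _ _ _)
  have : Module.Finite L W := Submodule.finiteDimensional_inf_left _ _
  let B := Module.finBasis L W
  let E := Module.Basis.ofVectorSpace L Ω
  obtain ⟨S, hS⟩ := exists_eq_sum_C_mul_map_mapCoeffs E F
  have hW i : mapCoeffs (E.coord i) F ∈ W := by
    refine ⟨fun m hm => hF fun h => hm ?_, mem_map_iff_forall_mapCoeffs_mem.mp hFP _⟩
    rw [coeff_mapCoeffs, h, map_zero]
  let e i := B.repr ⟨_, hW i⟩
  have he i : mapCoeffs (E.coord i) F = ∑ l, e i l • (B l : MvPolynomial σ L) := by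
    have := congrArg Subtype.val (B.sum_repr ⟨_, hW i⟩)
    simpa only [Submodule.coe_sum, Submodule.coe_smul] using this.symm
  refine ⟨fun l => ∑ i ∈ S, e i l • E i, fun m => ?_⟩
  have hcoeff : coeff m F = ∑ l, coeff m (B l : MvPolynomial σ L) • ∑ i ∈ S, e i l • E i := by
    conv_lhs => rw [hS]
    simp only [he, coeff_sum, coeff_C_mul, coeff_map, coeff_smul, map_sum, Finset.mul_sum,
      smul_eq_mul, map_mul, Algebra.smul_def (A := Ω)]
    rw [Finset.sum_comm]
    exact Finset.sum_congr rfl fun l _ => Finset.sum_congr rfl fun i _ => by ring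
  rw [hcoeff]
  exact Submodule.sum_mem _ fun l _ => Submodule.smul_mem _ _ (Submodule.subset_span ⟨l, rfl⟩)

namespace IsDefinedOver

lemma exists_coeff_mem_span_of_mem [IsAlgClosed L] {r b n d : ℕ}
    {Q : Ideal (MvPolynomial (Fin (r + 1)) Ω)} [Q.IsPrime] (h : IsDefinedOver L Q)
    {J : Fin (b + 1) → Fin (r + 1)} (hJ : ∀ e : Fin (b + 1) → Ω, ∑ j, C (e j) * X (J j) ∈ Q → e = 0)
    (htr : Algebra.trdeg Ω (MvPolynomial (Fin (r + 1)) Ω ⧸ Q) = ((n + 1 : ℕ) : Cardinal))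
    {F : MvPolynomial (Fin (r + 1)) Ω} (hF : F.IsHomogeneous d) (hFQ : F ∈ Q) :
    ∃ (w : ℕ) (τ : Fin w → Ω), w + minHilbert b n d ≤ (r + d).choose d ∧
      ∀ m, coeff m F ∈ Submodule.span L (Set.range τ) := by
  have hprime : (Q.comap (map (algebraMap L Ω))).IsPrime := Ideal.comap_isPrime _ _
  obtain ⟨J', hJ'⟩ := exists_isTranscendenceBasis_mk_X _ (eq_natCast_of_forall_natCast_le_iff
    fun m => h.natCast_le_trdeg_quotient_comap_iff.trans (by rw [htr, Nat.cast_le]))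
  have hJL : ∀ e : Fin (b + 1) → L, ∑ j, C (e j) * X (J j) ∈ Q.comap (map (algebraMap L Ω)) →
      e = 0 := fun e he => by
    simp only [Ideal.mem_comap, map_sum, map_mul, map_C, map_X] at he
    exact _root_.funext fun j => (map_eq_zero (algebraMap L Ω)).mp (congrFun (hJ _ he) j)
  have hHilbert := minHilbert_le_finrank_map_homogeneousSubmodule _
    ((linearIndependent_mk_X_iff _ _).mpr hJL) hJ' d
  have : Module.Finite L (homogeneousSubmodule (Fin (r + 1)) L d) :=
    Module.Finite.iff_fg.mpr (homogeneousSubmodule_fg _ _ _)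
  have hrank := finrank_inf_add_finrank_map L
    (Ideal.Quotient.mkₐ L (Q.comap (map (algebraMap L Ω)))).toLinearMap
    (homogeneousSubmodule (Fin (r + 1)) L d)
  have hker : LinearMap.ker (Ideal.Quotient.mkₐ L (Q.comap (map (algebraMap L Ω)))).toLinearMap =
      (Q.comap (map (algebraMap L Ω))).restrictScalars L :=
    SetLike.ext fun f => Ideal.Quotient.eq_zero_iff_mem
  rw [hker, finrank_homogeneousSubmodule] at hrank
  obtain ⟨τ, hτ⟩ := exists_coeff_mem_span_of_mem_map hF (by rwa [show Ideal.map _ _ = Q from h])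
  exact ⟨_, τ, hrank ▸ Nat.add_le_add_left hHilbert _, hτ⟩

lemma exists_isPrime_between_of_notMem [IsAlgClosed L] [Finite σ] {P : Ideal (MvPolynomial σ Ω)}
    [Q.IsPrime] [P.IsPrime] (h : IsDefinedOver L Q) (hQP : Q ≤ P) {n : ℕ}
    (htr : Algebra.trdeg Ω (MvPolynomial σ Ω ⧸ Q) = ((n + 1 : ℕ) : Cardinal))
    {F : MvPolynomial σ Ω} (hF : F ∈ Set.range (map (algebraMap L Ω))) (hFP : F ∈ P) (hFQ : F ∉ Q) :
    ∃ Q' : Ideal (MvPolynomial σ Ω), Q'.IsPrime ∧ Q ≤ Q' ∧ Q' ≤ P ∧ F ∈ Q' ∧ IsDefinedOver L Q' ∧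
      Algebra.trdeg Ω (MvPolynomial σ Ω ⧸ Q') = (n : Cardinal) := by
  obtain ⟨F, rfl⟩ := hF
  have : (Q.comap (map (algebraMap L Ω))).IsPrime := Ideal.comap_isPrime _ _
  have : (P.comap (map (algebraMap L Ω))).IsPrime := Ideal.comap_isPrime _ _
  obtain ⟨R, hR, hQR, hRP, hFR, htrR⟩ := exists_isPrime_between_mem_le_trdeg_quotient (k := L)
    (Ideal.comap_mono (f := map (algebraMap L Ω)) hQP) (f := F) hFP
  have hprime := isPrime_map_map_algebraMap (Ω := Ω) R
  have hQR' : Q ≤ R.map (map (algebraMap L Ω)) := (le_of_eq h.symm).trans (Ideal.map_mono hQR)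
  have hFR' : map (algebraMap L Ω) F ∈ R.map (map (algebraMap L Ω)) := Ideal.mem_map_of_mem _ hFR
  refine ⟨_, hprime, hQR', Ideal.map_le_iff_le_comap.mpr hRP, hFR', ?_,
    eq_natCast_of_forall_natCast_le_iff fun m => ⟨fun hm => ?_, fun hm => ?_⟩⟩
  · rw [IsDefinedOver, comap_map_map_algebraMap]
  · have hlt : Q < R.map (map (algebraMap L Ω)) :=
      hQR'.lt_of_ne fun heq => hFQ (heq ▸ hFR')
    have hsucc := add_one_le_trdeg_quotient_of_lt (k := Ω) hlt hm
    rw [htr, Nat.cast_le] at hsucc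
    omega
  · refine le_trdeg_quotient_map R (htrR m ?_)
    rw [h.natCast_le_trdeg_quotient_comap_iff, htr, Nat.cast_le]
    omega

end IsDefinedOver

end FieldOfDefinition

section LinearSpan

open MvPolynomial

variable {k σ : Type*} [Field k] {n : ℕ}

/-- Restriction of polynomials to the linear space on which the coordinates are the linear forms
in `n` free parameters with coefficients `A c`. -/
noncomputable def restrictToSpan (A : σ → Fin n → k) :
    MvPolynomial σ k →ₐ[k] MvPolynomial (Fin n) k :=
  aeval fun c => ∑ j, C (A c j) * X j

/-- The ideal of the linear space cut out by the relations `X c = ∑ j, A c j * X (J j)`. -/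
noncomputable def spanIdeal (J : Fin n → σ) (A : σ → Fin n → k) : Ideal (MvPolynomial σ k) :=
  Ideal.span (Set.range fun c => X c - ∑ j, C (A c j) * X (J j))

lemma rename_restrictToSpan_X (J : Fin n → σ) (A : σ → Fin n → k) (c : σ) :
    rename J (restrictToSpan A (X c)) = ∑ j, C (A c j) * X (J j) := by
  simp only [restrictToSpan, aeval_X, map_sum, map_mul, rename_C, rename_X]

lemma sub_rename_restrictToSpan_mem (J : Fin n → σ) (A : σ → Fin n → k) (f : MvPolynomial σ k) :
    f - rename J (restrictToSpan A f) ∈ spanIdeal J A := by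
  have hmk : Ideal.Quotient.mkₐ k (spanIdeal J A) =
      (Ideal.Quotient.mkₐ k (spanIdeal J A)).comp ((rename J).comp (restrictToSpan A)) :=
    algHom_ext fun c => Ideal.Quotient.eq.mpr
      (Ideal.subset_span ⟨c, congrArg (X c - ·) (rename_restrictToSpan_X J A c).symm⟩)
  exact Ideal.Quotient.eq.mp (DFunLike.congr_fun hmk f)

namespace IsSpanCoordinates

variable {P : Ideal (MvPolynomial σ k)} {J : Fin n → σ} {A : σ → Fin n → k}

lemma apply_apply (h : IsSpanCoordinates P J A) (i j : Fin n) :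
    A (J i) j = if i = j then 1 else 0 := by
  have hmem := h.X_sub_mem (J i)
  have hX : X (J i) = ∑ j, C (if i = j then 1 else 0 : k) * X (J j) := by
    simp only [apply_ite C, C_1, C_0, ite_mul, one_mul, zero_mul, Finset.sum_ite_eq,
      Finset.mem_univ, if_true]
  rw [hX, ← Finset.sum_sub_distrib] at hmem
  simp only [← sub_mul, ← C_sub] at hmem
  exact (sub_eq_zero.mp (congrFun (h.eq_zero_of_mem _ hmem) j)).symm

lemma injective (h : IsSpanCoordinates P J A) : Function.Injective J := fun i j hij => by
  by_contra hne
  have hi := h.apply_apply i j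
  rw [hij, h.apply_apply, if_pos rfl, if_neg hne] at hi
  exact one_ne_zero hi

lemma spanIdeal_le (h : IsSpanCoordinates P J A) : spanIdeal J A ≤ P :=
  Ideal.span_le.mpr (Set.range_subset_iff.mpr h.X_sub_mem)

lemma restrictToSpan_X (h : IsSpanCoordinates P J A) (i : Fin n) :
    restrictToSpan A (X (J i)) = X i := by
  simp only [restrictToSpan, aeval_X, h.apply_apply, apply_ite C, C_1, C_0, ite_mul, one_mul,
    zero_mul, Finset.sum_ite_eq, Finset.mem_univ, if_true]

lemma restrictToSpan_rename (h : IsSpanCoordinates P J A) (q : MvPolynomial (Fin n) k) :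
    restrictToSpan A (rename J q) = q := by
  have hid : (restrictToSpan A).comp (rename J) = AlgHom.id k _ :=
    algHom_ext fun i => by rw [AlgHom.comp_apply, rename_X, h.restrictToSpan_X, AlgHom.id_apply]
  exact DFunLike.congr_fun hid q

lemma ker_restrictToSpan (h : IsSpanCoordinates P J A) :
    RingHom.ker (restrictToSpan A) = spanIdeal J A := by
  refine le_antisymm (fun f hf => ?_) (Ideal.span_le.mpr (Set.range_subset_iff.mpr fun c => ?_))
  · have hmem := sub_rename_restrictToSpan_mem J A f
    rwa [RingHom.mem_ker.mp hf, map_zero, sub_zero] at hmem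
  · rw [SetLike.mem_coe, RingHom.mem_ker, ← rename_restrictToSpan_X, map_sub,
      h.restrictToSpan_rename, sub_self]

lemma isPrime_spanIdeal (h : IsSpanCoordinates P J A) : (spanIdeal J A).IsPrime :=
  h.ker_restrictToSpan ▸ RingHom.ker_isPrime _

lemma trdeg_quotient_spanIdeal (h : IsSpanCoordinates P J A) :
    Algebra.trdeg k (MvPolynomial σ k ⧸ spanIdeal J A) = (n : Cardinal) := by
  have hsurj : Function.Surjective (restrictToSpan A) := fun q => ⟨_, h.restrictToSpan_rename q⟩
  have hlift := (Ideal.quotientKerAlgEquivOfSurjective hsurj).lift_trdeg_eq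
  rw [← h.ker_restrictToSpan]
  rwa [MvPolynomial.trdeg_of_isDomain, Cardinal.mk_fin, Cardinal.lift_natCast,
    Cardinal.lift_natCast, Cardinal.lift_eq_nat_iff] at hlift

/-- The parameters are the `A c j` with `c` outside the range of `J`: the other ones are `0`
or `1`. -/
lemma exists_isDefinedOver_spanIdeal (h : IsSpanCoordinates P J A) (K : Type*) [Field K]
    [Algebra K k] [Fintype σ] :
    ∃ T : Finset k, T.card ≤ (Fintype.card σ - n) * n ∧
      IsDefinedOver (algClosureAdjoin K (T : Set k)) (spanIdeal J A) := by
  classical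
  let T := ((Finset.univ \ Finset.univ.image J) ×ˢ Finset.univ).image fun x => A x.1 x.2
  have hA (c : σ) (j : Fin n) : A c j ∈ algClosureAdjoin K (T : Set k) := by
    by_cases hc : c ∈ Finset.univ.image J
    · obtain ⟨i, -, rfl⟩ := Finset.mem_image.mp hc
      rw [h.apply_apply]
      split_ifs
      exacts [one_mem _, zero_mem _]
    · exact subset_algClosureAdjoin _ (Finset.mem_image_of_mem (fun x => A x.1 x.2)
        (a := (c, j)) (by simpa using hc))
  refine ⟨T, Finset.card_image_le.trans ?_, isDefinedOver_span
    (Set.range_subset_iff.mpr fun c => ⟨X c - ∑ j, C ⟨A c j, hA c j⟩ * X (J j), ?_⟩)⟩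
  · rw [Finset.card_product, Finset.card_sdiff_of_subset (Finset.subset_univ _),
      Finset.card_image_of_injective _ h.injective, Finset.card_univ, Finset.card_univ,
      Fintype.card_fin]
  · simp only [map_sub, map_sum, map_mul, map_X, map_C]
    rfl

end IsSpanCoordinates

end LinearSpan

section ParameterCount

open MvPolynomial

/-- The number of parameters saved when the forms number `j ∈ B` lie in the prime ideals
constructed so far while the other ones cut down the dimension: `b - #(range j \ B)` is the
dimension reached when the `j`-th form is examined. -/
def savedParameters (b : ℕ) (d : ℕ → ℕ) (B : Finset ℕ) : ℕ :=
  ∑ j ∈ B, minHilbert b (b - (Finset.range j \ B).card) (d j)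

lemma range_sdiff_insert {B : Finset ℕ} {i j : ℕ} (hj : j ≤ i) :
    Finset.range j \ insert i B = Finset.range j \ B := by
  rw [Finset.sdiff_insert_of_notMem (Finset.mem_range.not.mpr (by omega))]

lemma range_succ_sdiff_insert {B : Finset ℕ} {i : ℕ} :
    Finset.range (i + 1) \ insert i B = Finset.range i \ B := by
  rw [Finset.range_add_one, Finset.insert_sdiff_of_mem _ (Finset.mem_insert_self i B),
    range_sdiff_insert le_rfl]

lemma savedParameters_insert {b : ℕ} {d : ℕ → ℕ} {B : Finset ℕ} {i : ℕ}
    (hB : B ⊆ Finset.range i) :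
    savedParameters b d (insert i B) =
      minHilbert b (b - (Finset.range i \ B).card) (d i) + savedParameters b d B := by
  have hi : i ∉ B := fun h => Finset.notMem_range_self (hB h)
  rw [savedParameters, Finset.sum_insert hi, range_sdiff_insert le_rfl]
  refine congrArg _ (Finset.sum_congr rfl fun j hj => ?_)
  rw [range_sdiff_insert (Finset.mem_range.mp (hB hj)).le]

variable (K : Type*) {Ω : Type*} [Field K] [Field Ω] [Algebra K Ω] {r : ℕ}

/-- The state of the parameter count after the first `i` forms `F j`, of degree `d j`, in the prime
`P`. The prime `Q ≤ P` contains them and has dimension `n`; together with their coefficients it is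
determined, up to finitely many choices, by the parameters in `T`. The forms number `j ∈ B` did not
lower the dimension. -/
structure ParameterCount (b : ℕ) (P : Ideal (MvPolynomial (Fin (r + 1)) Ω))
    (F : ℕ → MvPolynomial (Fin (r + 1)) Ω) (d : ℕ → ℕ) (i : ℕ) (T : Finset Ω)
    (Q : Ideal (MvPolynomial (Fin (r + 1)) Ω)) (B : Finset ℕ) (n : ℕ) : Prop where
  isPrime : Q.IsPrime
  le : Q ≤ P
  isDefinedOver : IsDefinedOver (algClosureAdjoin K (T : Set Ω)) Q
  trdeg_eq : Algebra.trdeg Ω (MvPolynomial (Fin (r + 1)) Ω ⧸ Q) = ((n + 1 : ℕ) : Cardinal)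
  subset_range : B ⊆ Finset.range i
  add_card : n + (Finset.range i \ B).card = b
  mem : ∀ j < i, F j ∈ Q
  coeff_mem : ∀ j < i, ∀ m, coeff m (F j) ∈ algClosureAdjoin K (T : Set Ω)
  card_add_le : T.card + savedParameters b d B ≤
    (r - b) * (b + 1) + ∑ j ∈ Finset.range i, (r + d j).choose (d j)

variable {K}

lemma mem_algClosureAdjoin_union_of_mem_span {T S : Set Ω} {x : Ω}
    (hx : x ∈ Submodule.span (algClosureAdjoin K T) S) : x ∈ algClosureAdjoin K (T ∪ S) := by
  induction hx using Submodule.span_induction with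
  | mem x hx => exact subset_algClosureAdjoin _ (Or.inr hx)
  | zero => exact zero_mem _
  | add x y _ _ hx hy => exact add_mem hx hy
  | smul c x _ hx => exact mul_mem (algClosureAdjoin_mono Set.subset_union_left c.2) hx

lemma IsDefinedOver.algClosureAdjoin_mono {σ : Type*} {T T' : Set Ω} (hT : T ⊆ T')
    {Q : Ideal (MvPolynomial σ Ω)} (h : IsDefinedOver (algClosureAdjoin K T) Q) :
    IsDefinedOver (algClosureAdjoin K T') Q :=
  h.mono (Set.range_subset_iff.mpr fun a => ⟨⟨a, _root_.algClosureAdjoin_mono hT a.2⟩, rfl⟩)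

variable {b : ℕ} {P : Ideal (MvPolynomial (Fin (r + 1)) Ω)}

lemma IsSpanCoordinates.exists_parameterCount_zero {J : Fin (b + 1) → Fin (r + 1)}
    {A : Fin (r + 1) → Fin (b + 1) → Ω} (h : IsSpanCoordinates P J A)
    (F : ℕ → MvPolynomial (Fin (r + 1)) Ω) (d : ℕ → ℕ) :
    ∃ T, ParameterCount K b P F d 0 T (spanIdeal J A) ∅ b := by
  obtain ⟨T, hT, hdef⟩ := h.exists_isDefinedOver_spanIdeal K
  refine ⟨T, h.isPrime_spanIdeal, h.spanIdeal_le, hdef, h.trdeg_quotient_spanIdeal, subset_rfl,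
    rfl, fun _ hj => (Nat.not_lt_zero _ hj).elim, fun _ hj => (Nat.not_lt_zero _ hj).elim, ?_⟩
  simpa [savedParameters] using hT

namespace ParameterCount

variable {F : ℕ → MvPolynomial (Fin (r + 1)) Ω} {d : ℕ → ℕ} {i : ℕ} {T : Finset Ω}
  {Q : Ideal (MvPolynomial (Fin (r + 1)) Ω)} {B : Finset ℕ} {n : ℕ}

lemma le_of_le_trdeg (h : ParameterCount K b P F d i T Q B n) {m : ℕ}
    (hm : ((m + 1 : ℕ) : Cardinal) ≤ Algebra.trdeg Ω (MvPolynomial (Fin (r + 1)) Ω ⧸ P)) :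
    m ≤ n := by
  have hle := hm.trans (trdeg_quotient_anti h.le)
  rw [h.trdeg_eq, Nat.cast_le] at hle
  omega

lemma lt_of_notMem [P.IsPrime] (h : ParameterCount K b P F d i T Q B n) {m : ℕ}
    (hm : ((m + 1 : ℕ) : Cardinal) ≤ Algebra.trdeg Ω (MvPolynomial (Fin (r + 1)) Ω ⧸ P))
    (hFP : F i ∈ P) (hFQ : F i ∉ Q) : m < n := by
  have := h.isPrime
  have hlt : Q < P := h.le.lt_of_ne fun hQP => hFQ (hQP ▸ hFP)
  have hle := add_one_le_trdeg_quotient_of_lt (k := Ω) hlt hm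
  rw [h.trdeg_eq, Nat.cast_le] at hle
  omega

lemma exists_succ_of_mem [IsAlgClosed Ω] (h : ParameterCount K b P F d i T Q B n)
    {J : Fin (b + 1) → Fin (r + 1)} (hJ : ∀ e : Fin (b + 1) → Ω, ∑ j, C (e j) * X (J j) ∈ P → e = 0)
    (hF : (F i).IsHomogeneous (d i)) (hFQ : F i ∈ Q) :
    ∃ T', ParameterCount K b P F d (i + 1) T' Q (insert i B) n := by
  classical
  have := h.isPrime
  obtain ⟨w, τ, hw, hτ⟩ := h.isDefinedOver.exists_coeff_mem_span_of_mem
    (fun e he => hJ e (h.le he)) h.trdeg_eq hF hFQ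
  let S := Finset.univ.image τ
  have hcoe : ((T ∪ S : Finset Ω) : Set Ω) = (T : Set Ω) ∪ Set.range τ := by
    rw [Finset.coe_union, Finset.coe_image, Finset.coe_univ, Set.image_univ]
  have hT : (T : Set Ω) ⊆ (T ∪ S : Finset Ω) := Finset.coe_subset.mpr Finset.subset_union_left
  refine ⟨T ∪ S, h.isPrime, h.le, h.isDefinedOver.algClosureAdjoin_mono hT, h.trdeg_eq, ?_, ?_,
    Nat.forall_lt_succ_right.mpr ⟨h.mem, hFQ⟩, Nat.forall_lt_succ_right.mpr
      ⟨fun j hj m => algClosureAdjoin_mono hT (h.coeff_mem j hj m), fun m => ?_⟩, ?_⟩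
  · exact Finset.range_add_one ▸ Finset.insert_subset_insert _ h.subset_range
  · rw [range_succ_sdiff_insert, h.add_card]
  · rw [hcoe]
    exact mem_algClosureAdjoin_union_of_mem_span (hτ m)
  · have hdim : b - (Finset.range i \ B).card = n := by have := h.add_card; omega
    have hS : S.card ≤ w := Finset.card_image_le.trans_eq (Finset.card_fin w)
    have hcard := Finset.card_union_le T S
    have hle := h.card_add_le
    rw [savedParameters_insert h.subset_range, hdim, Finset.sum_range_succ]
    omega

lemma exists_succ_of_notMem [IsAlgClosed Ω] [P.IsPrime]
    (h : ParameterCount K b P F d i T Q B (n + 1)) (hF : (F i).IsHomogeneous (d i))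
    (hFP : F i ∈ P) (hFQ : F i ∉ Q) :
    ∃ T' Q', ParameterCount K b P F d (i + 1) T' Q' B n := by
  classical
  have := h.isPrime
  let S := (F i).coeffs
  have hT : (T : Set Ω) ⊆ (T ∪ S : Finset Ω) := Finset.coe_subset.mpr Finset.subset_union_left
  have hcoeff (m) : coeff m (F i) ∈ algClosureAdjoin K ((T ∪ S : Finset Ω) : Set Ω) := by
    by_cases hm : coeff m (F i) = 0
    · exact hm ▸ zero_mem _
    · exact subset_algClosureAdjoin _
        (Finset.mem_coe.mpr (Finset.mem_union_right _ (coeff_mem_coeffs m hm)))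
  have hrange : F i ∈ Set.range (map (algebraMap (algClosureAdjoin K ((T ∪ S : Finset Ω) : Set Ω))
      Ω)) := mem_range_map_iff_coeffs_subset.mpr fun x hx => by
    obtain ⟨m, -, rfl⟩ := mem_coeffs_iff.mp hx
    exact ⟨⟨_, hcoeff m⟩, rfl⟩
  obtain ⟨Q', hQ', hQQ', hQ'P, hFQ', hdef, htr⟩ := (h.isDefinedOver.algClosureAdjoin_mono
    hT).exists_isPrime_between_of_notMem h.le h.trdeg_eq hrange hFP hFQ
  have hi : i ∉ B := fun hi => Finset.notMem_range_self (h.subset_range hi)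
  refine ⟨T ∪ S, Q', hQ', hQ'P, hdef, htr, h.subset_range.trans (Finset.range_mono i.le_succ), ?_,
    Nat.forall_lt_succ_right.mpr ⟨fun j hj => hQQ' (h.mem j hj), hFQ'⟩,
    Nat.forall_lt_succ_right.mpr
      ⟨fun j hj m => algClosureAdjoin_mono hT (h.coeff_mem j hj m), hcoeff⟩, ?_⟩
  · rw [Finset.range_add_one, Finset.insert_sdiff_of_notMem _ hi, Finset.card_insert_of_notMem
      fun hi => Finset.notMem_range_self (Finset.mem_sdiff.mp hi).1, ← h.add_card]
    omega
  · have hcard := Finset.card_union_le T S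
    have hS : S.card ≤ (r + d i).choose (d i) := card_coeffs_le hF
    have hle := h.card_add_le
    rw [Finset.sum_range_succ]
    omega

end ParameterCount

variable [IsAlgClosed Ω] [P.IsPrime] {F : ℕ → MvPolynomial (Fin (r + 1)) Ω} {d : ℕ → ℕ} {k m : ℕ}
  {J : Fin (b + 1) → Fin (r + 1)} {A : Fin (r + 1) → Fin (b + 1) → Ω}

variable (K) in
lemma IsSpanCoordinates.exists_parameterCount (h : IsSpanCoordinates P J A)
    (hP : ((m + 1 : ℕ) : Cardinal) ≤ Algebra.trdeg Ω (MvPolynomial (Fin (r + 1)) Ω ⧸ P))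
    (hF : ∀ j < k, (F j).IsHomogeneous (d j)) (hFP : ∀ j < k, F j ∈ P) :
    ∃ T Q B n, ParameterCount K b P F d k T Q B n := by
  induction k with
  | zero =>
    obtain ⟨T, hT⟩ := h.exists_parameterCount_zero (K := K) F d
    exact ⟨_, _, _, _, hT⟩
  | succ k ih =>
    rw [Nat.forall_lt_succ_right] at hF hFP
    obtain ⟨T, Q, B, n, hT⟩ := ih hF.1 hFP.1
    by_cases hFQ : F k ∈ Q
    · obtain ⟨T', hT'⟩ := hT.exists_succ_of_mem h.eq_zero_of_mem hF.2 hFQ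
      exact ⟨_, _, _, _, hT'⟩
    · obtain ⟨n, rfl⟩ := Nat.exists_eq_add_of_lt (hT.lt_of_notMem hP hFP.2 hFQ)
      obtain ⟨T', Q', hT'⟩ := hT.exists_succ_of_notMem hF.2 hFP.2 hFQ
      exact ⟨_, _, _, _, hT'⟩

variable (K) in
/-- By `hlast`, the last form cannot lower the dimension: the first `k` forms have already reached
the dimension of `P`. -/
lemma IsSpanCoordinates.exists_card_add_savedParameters_le (h : IsSpanCoordinates P J A)
    (hP : ((m + 1 : ℕ) : Cardinal) ≤ Algebra.trdeg Ω (MvPolynomial (Fin (r + 1)) Ω ⧸ P))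
    (hF : ∀ j < k + 1, (F j).IsHomogeneous (d j)) (hFP : ∀ j < k + 1, F j ∈ P)
    (hlast : ∀ Q : Ideal (MvPolynomial (Fin (r + 1)) Ω), Q.IsPrime → Q ≤ P → (∀ j < k, F j ∈ Q) →
      Algebra.trdeg Ω (MvPolynomial (Fin (r + 1)) Ω ⧸ Q) < ((m + 1 + 1 : ℕ) : Cardinal)) :
    ∃ (T : Finset Ω) (B : Finset ℕ), k ∈ B ∧ B ⊆ Finset.range (k + 1) ∧
      m + (Finset.range (k + 1) \ B).card = b ∧
      (∀ j < k + 1, ∀ n, coeff n (F j) ∈ algClosureAdjoin K (T : Set Ω)) ∧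
      T.card + savedParameters b d B ≤
        (r - b) * (b + 1) + ∑ j ∈ Finset.range (k + 1), (r + d j).choose (d j) := by
  have hF' := Nat.forall_lt_succ_right.mp hF
  have hFP' := Nat.forall_lt_succ_right.mp hFP
  obtain ⟨T, Q, B, n, hT⟩ := h.exists_parameterCount K hP hF'.1 hFP'.1
  have hlt := hlast Q hT.isPrime hT.le hT.mem
  rw [hT.trdeg_eq, Nat.cast_lt] at hlt
  obtain rfl : n = m := le_antisymm (by omega) (hT.le_of_le_trdeg hP)
  have hFQ : F k ∈ Q := by
    by_contra hFQ
    exact lt_irrefl _ (hT.lt_of_notMem hP hFP'.2 hFQ)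
  obtain ⟨T', hT'⟩ := hT.exists_succ_of_mem h.eq_zero_of_mem hF'.2 hFQ
  exact ⟨T', _, Finset.mem_insert_self _ _, hT'.subset_range, hT'.add_card, hT'.coeff_mem,
    hT'.card_add_le⟩

end ParameterCount

section VanishingIdeal

open MvPolynomial

variable (K : Type*) [Field K] {M : Type*} [AddCommGroup M] [Module K M]

/-- The ideal of polynomials in the linear functionals of `M` that vanish on `X`. -/
noncomputable def functionalVanishingIdeal (X : Set M) : Ideal (MvPolynomial (M →ₗ[K] K) K) :=
  vanishingIdeal K ((fun v (φ : M →ₗ[K] K) => φ v) '' X)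

variable {K}

lemma mem_functionalVanishingIdeal {X : Set M} {p : MvPolynomial (M →ₗ[K] K) K} :
    p ∈ functionalVanishingIdeal K X ↔ ∀ v ∈ X, polyEval K M p v = 0 := by
  rw [functionalVanishingIdeal, mem_vanishingIdeal_iff, Set.forall_mem_image]
  rfl

lemma functionalVanishingIdeal_anti {X Y : Set M} (h : X ⊆ Y) :
    functionalVanishingIdeal K Y ≤ functionalVanishingIdeal K X :=
  vanishingIdeal_anti_mono (Set.image_mono h)

variable [TopologicalSpace M]

lemma isClosed_setOf_polyEval_eq_zero
    (hM : ∀ s : Set M, IsClosed s ↔ s ∈ zariskiCloseds K M)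
    (p : MvPolynomial (M →ₗ[K] K) K) :
    IsClosed {v : M | polyEval K M p v = 0} :=
  (hM _).mpr ⟨{p}, Set.ext fun v => by simp⟩

lemma functionalVanishingIdeal_le_closure
    (hM : ∀ s : Set M, IsClosed s ↔ s ∈ zariskiCloseds K M)
    (X : Set M) :
    functionalVanishingIdeal K X ≤ functionalVanishingIdeal K (closure X) := fun p hp =>
  mem_functionalVanishingIdeal.mpr (closure_minimal (mem_functionalVanishingIdeal.mp hp)
    (isClosed_setOf_polyEval_eq_zero hM p))

lemma subset_of_functionalVanishingIdeal_le
    (hM : ∀ s : Set M, IsClosed s ↔ s ∈ zariskiCloseds K M)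
    {X Y : Set M} (hX : IsClosed X)
    (h : functionalVanishingIdeal K X ≤ functionalVanishingIdeal K Y) : Y ⊆ X := by
  obtain ⟨S, rfl⟩ := (hM X).mp hX
  exact fun v hv p hp => mem_functionalVanishingIdeal.mp
    (h (mem_functionalVanishingIdeal.mpr fun w hw => hw p hp)) v hv

lemma isPrime_functionalVanishingIdeal
    (hM : ∀ s : Set M, IsClosed s ↔ s ∈ zariskiCloseds K M)
    {X : Set M} (hX : IsIrreducible X) :
    (functionalVanishingIdeal K X).IsPrime := by
  refine ⟨fun htop => ?_, fun {p q} hpq => ?_⟩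
  · obtain ⟨v, hv⟩ := hX.1
    have h1 := mem_functionalVanishingIdeal.mp ((Ideal.eq_top_iff_one _).mp htop) v hv
    exact one_ne_zero ((map_one (eval fun φ : M →ₗ[K] K => φ v)).symm.trans h1)
  · simp only [mem_functionalVanishingIdeal] at hpq ⊢
    exact isPreirreducible_iff_isClosed_union_isClosed.mp hX.2 _ _
      (isClosed_setOf_polyEval_eq_zero hM p) (isClosed_setOf_polyEval_eq_zero hM q)
      fun v hv => mul_eq_zero.mp ((polyEval_mul K M p q v).symm.trans (hpq v hv))

lemma exists_ltSeries_primeSpectrum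
    (hM : ∀ s : Set M, IsClosed s ↔ s ∈ zariskiCloseds K M) {X : Set M}
    (c : LTSeries (TopologicalSpace.IrreducibleCloseds (closure X))) :
    ∃ l : LTSeries (PrimeSpectrum (MvPolynomial (M →ₗ[K] K) K)),
      l.length = c.length ∧ functionalVanishingIdeal K X ≤ l.head.asIdeal := by
  let toPrime (Z : TopologicalSpace.IrreducibleCloseds (closure X)) :
      PrimeSpectrum (MvPolynomial (M →ₗ[K] K) K) :=
    ⟨functionalVanishingIdeal K (Subtype.val '' (Z : Set (closure X))),
      isPrime_functionalVanishingIdeal hM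
        (Z.isIrreducible.image _ continuous_subtype_val.continuousOn)⟩
  have hanti : StrictAnti toPrime := fun Z Z' h => by
    refine lt_of_le_not_ge (functionalVanishingIdeal_anti (Set.image_mono h.le)) fun hle => ?_
    have hclosed := isClosed_closure.isClosedEmbedding_subtypeVal.isClosedMap _ Z.isClosed
    exact h.not_ge ((Set.image_subset_image_iff Subtype.val_injective).mp
      (subset_of_functionalVanishingIdeal_le hM hclosed hle))
  refine ⟨LTSeries.mk c.length (fun i => toPrime (c i.rev))
    fun _ _ h => hanti (c.strictMono (Fin.rev_lt_rev.mpr h)), rfl, ?_⟩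
  exact (functionalVanishingIdeal_le_closure hM X).trans
    (functionalVanishingIdeal_anti (Subtype.coe_image_subset _ _))

end VanishingIdeal

section GenericUltrafilter

open MvPolynomial

variable {K : Type*} [Field K]

/-- A generic point of the zero locus of `q`, as an ultrafilter on `X`. -/
lemma exists_ultrafilter_mem_of_eventually_polyEval_eq_zero {M : Type*} [AddCommGroup M]
    [Module K M] {X : Set M} {q : Ideal (MvPolynomial (M →ₗ[K] K) K)} [q.IsPrime]
    (hq : functionalVanishingIdeal K X ≤ q) :
    ∃ U : Ultrafilter X, ∀ g, (∀ᶠ x : X in U, polyEval K M g x = 0) → g ∈ q := by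
  obtain ⟨U, hU⟩ := Ultrafilter.exists_ultrafilter_of_finite_inter_nonempty
    ((fun g => {x : X | polyEval K M g x ≠ 0}) '' {g | g ∉ q}) fun S hS => by
      obtain ⟨G, hG, rfl⟩ := Finset.subset_set_image_iff.mp hS
      have hprod : ∏ g ∈ G, g ∉ q := fun h =>
        have ⟨g, hg, hgq⟩ := Ideal.IsPrime.prod_mem_iff.mp h
        hG hg hgq
      have hne := mem_functionalVanishingIdeal.not.mp fun h => hprod (hq h)
      push Not at hne
      obtain ⟨x, hx, hne⟩ := hne
      simp only [polyEval, map_prod] at hne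
      exact ⟨⟨x, hx⟩, by simpa [polyEval] using Finset.prod_ne_zero_iff.mp hne⟩
  refine ⟨U, fun g hg => by_contra fun hgq => ?_⟩
  have hne : ∀ᶠ x : X in U, polyEval K M g x ≠ 0 := hU (Set.mem_image_of_mem _ hgq)
  obtain ⟨x, hx, hx'⟩ := (hg.and hne).exists
  exact hx' hx

lemma exists_isUltrapowerMap.{u, v} (K : Type u) [Field K] {I : Type v}
    (U : Ultrafilter I) : ∃ (Ω : Type (max u v)) (_ : Field Ω) (_ : Algebra K Ω)
      (π : (I → K) →ₐ[K] Ω), IsUltrapowerMap U π :=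
  letI := ((Filter.Germ.coeRingHom (U : Filter I)).comp (algebraMap K (I → K))).toAlgebra
  ⟨(U : Filter I).Germ K, inferInstance, this, ⟨Filter.Germ.coeRingHom _, fun _ => rfl⟩,
    Quotient.mk_surjective, fun _ => Filter.Germ.coe_eq⟩

lemma le_card_of_ker_le {Ω R : Type*} [Field Ω] [Algebra K Ω] [CommRing R] [Algebra K R]
    {T : Finset Ω} (θ : R →ₐ[K] algClosureAdjoin K (T : Set Ω)) {q : Ideal R}
    (hq : RingHom.ker θ ≤ q) {n : ℕ} (hn : (n : Cardinal) ≤ Algebra.trdeg K (R ⧸ q)) :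
    n ≤ T.card := by
  have : (RingHom.ker θ).IsPrime := RingHom.ker_isPrime _
  obtain ⟨x, hx⟩ := natCast_le_trdeg_iff.mp (hn.trans (trdeg_quotient_anti hq))
  exact card_le_of_algebraicIndependent_algClosureAdjoin
    (hx.map' (f := Ideal.kerLiftAlg θ) (Ideal.kerLiftAlg_injective θ))

end GenericUltrafilter

section ChainLength

open MvPolynomial

variable {K : Type*} [Field K] {M : Type*} [AddCommGroup M] [Module K M]

lemma map_polyEval_mem {I Ω : Type*} [Field Ω] [Algebra K Ω] (π : (I → K) →ₐ[K] Ω)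
    (L : Subalgebra K Ω) {x : I → M} (h : ∀ φ : M →ₗ[K] K, π (fun i => φ (x i)) ∈ L)
    (g : MvPolynomial (M →ₗ[K] K) K) : π (fun i => polyEval K M g (x i)) ∈ L := by
  induction g using MvPolynomial.induction_on with
  | C c =>
    simp only [polyEval, eval_C]
    exact (π.commutes c).symm ▸ L.algebraMap_mem c
  | add p q hp hq =>
    simp only [polyEval, map_add] at hp hq ⊢
    exact (map_add π _ _).symm ▸ add_mem hp hq
  | mul_X p φ hp =>
    simp only [polyEval, map_mul, eval_X] at hp ⊢
    exact (map_mul π _ _).symm ▸ mul_mem hp (h φ)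

/-- The generic point of a chain of closed sets: over the ultrapower, the transcendence degree of
its coordinates bounds the length of the chain. -/
lemma exists_ultrafilter_length_le_card.{w} [TopologicalSpace M]
    (hM : ∀ s : Set M, IsClosed s ↔ s ∈ zariskiCloseds K M) {X : Set M}
    (c : LTSeries (TopologicalSpace.IrreducibleCloseds (closure X))) :
    ∃ U : Ultrafilter X, ∀ {Ω : Type w} [Field Ω] [Algebra K Ω] {π : (X → K) →ₐ[K] Ω},
      IsUltrapowerMap U π → ∀ T : Finset Ω,
      (∀ φ : M →ₗ[K] K, π (fun x => φ x) ∈ algClosureAdjoin K (T : Set Ω)) →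
      c.length ≤ T.card := by
  obtain ⟨l, hlength, hhead⟩ := exists_ltSeries_primeSpectrum hM c
  obtain ⟨U, hU⟩ := exists_ultrafilter_mem_of_eventually_polyEval_eq_zero hhead
  refine ⟨U, fun {Ω} _ _ {π} hπ T hT => ?_⟩
  let ev : MvPolynomial (M →ₗ[K] K) K →ₐ[K] X → K := AlgHom.pi fun x => aeval fun φ => φ x
  let θ := (π.comp ev).codRestrict (algClosureAdjoin K (T : Set Ω)).toSubalgebra
    (map_polyEval_mem π _ hT)
  refine hlength ▸ le_card_of_ker_le (q := l.head.asIdeal) θ (fun g hg => hU g ?_)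
    (length_le_trdeg_quotient_head l)
  exact (hπ.map_eq_zero_iff _).mp (congrArg Subtype.val hg)

end ChainLength

section TuplesOfForms

open MvPolynomial

variable {K : Type*} [Field K] {r n : ℕ} {d : Fin n → ℕ}

lemma isClosed_iff_mem_zariskiCloseds (s : Set (tupleSpace K r n d)) :
    IsClosed s ↔ s ∈ zariskiCloseds K (tupleSpace K r n d) := by
  rw [← isOpen_compl_iff]
  change sᶜᶜ ∈ _ ↔ _
  rw [compl_compl]

/-- The functionals taking the coefficients of the forms span the dual of the space of tuples. -/
lemma linearMap_mem_of_coeff_mem {I Ω : Type*} [Field Ω] [Algebra K Ω] (π : (I → K) →ₐ[K] Ω)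
    (L : Submodule K Ω) {x : I → tupleSpace K r n d}
    (h : ∀ j m, π (fun i => coeff m (x i j : MvPolynomial (Fin (r + 1)) K)) ∈ L)
    (φ : tupleSpace K r n d →ₗ[K] K) : π (fun i => φ (x i)) ∈ L := by
  have (j : Fin n) : Module.Finite K (homogeneousSubmodule (Fin (r + 1)) K (d j)) :=
    Module.Finite.iff_fg.mpr (homogeneousSubmodule_fg _ _ _)
  let coeffFunctional (p : Fin n × (Fin (r + 1) →₀ ℕ)) : tupleSpace K r n d →ₗ[K] K :=
    lcoeff K p.2 ∘ₗ Submodule.subtype _ ∘ₗ LinearMap.proj p.1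
  have hspan : Submodule.span K (Set.range coeffFunctional) = ⊤ := by
    refine Submodule.span_eq_top_of_ne_zero fun F hF => ?_
    obtain ⟨j, hj⟩ := Function.ne_iff.mp hF
    obtain ⟨m, hm⟩ := ne_zero_iff.mp (Subtype.coe_ne_coe.mpr hj)
    exact ⟨_, ⟨(j, m), rfl⟩, hm⟩
  have hφ : φ ∈ Submodule.span K (Set.range coeffFunctional) := hspan ▸ Submodule.mem_top
  induction hφ using Submodule.span_induction with
  | mem φ hφ =>
    obtain ⟨p, rfl⟩ := hφ
    exact h p.1 p.2
  | zero => exact (map_zero π).symm ▸ L.zero_mem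
  | add φ ψ _ _ hφ hψ => exact (map_add π _ _).symm ▸ L.add_mem hφ hψ
  | smul c φ _ hφ => exact (map_smul π c _).symm ▸ L.smul_mem c hφ

lemma eval_zero_eq_zero_of_mem {p : Ideal (MvPolynomial (Fin (r + 1)) K)}
    (hp : IsHomogeneousIdeal K p) (hne : p ≠ ⊤) {f : MvPolynomial (Fin (r + 1)) K} (hf : f ∈ p) :
    eval 0 f = 0 := by
  have hC : C (eval 0 f) ∈ p := by
    simpa [homogeneousComponent_zero, constantCoeff_eq] using hp f hf 0
  by_contra h
  exact hne (Ideal.eq_top_of_isUnit_mem p hC ((isUnit_iff_ne_zero.mpr h).map C))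

lemma trdeg_quotient_lt_of_not_vdimGE {F : Fin n → MvPolynomial (Fin (r + 1)) K} {m : ℤ}
    (h : ¬ vdimGE r n F m) {Q : Ideal (MvPolynomial (Fin (r + 1)) K)} [Q.IsPrime]
    (hQ : ∀ i, F i ∈ Q) :
    Algebra.trdeg K (MvPolynomial (Fin (r + 1)) K ⧸ Q) < ((m.toNat + 1 : ℕ) : Cardinal) := by
  contrapose! h
  exact le_ringKrullDim_quotient_of_le_trdeg
    (Ideal.span_le.mpr (Set.range_subset_iff.mpr hQ)) h

end TuplesOfForms

section SpanLocus

open MvPolynomial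

variable {K : Type*} [Field K] {r a b k : ℕ} {d : ℕ → ℕ}

variable (K) in
/-- The locus
`Φ^{ℙ^r,a}_{d_0,…,d_k}(ℙ^r, Span(r,b)) \ (Φ^{ℙ^r,a}_{d_0,…,d_{k-1}}(ℙ^r) × W_{r,d_k})`.
The degrees form an infinite sequence, of which only the first `k + 1` terms matter. -/
def spanLocus (r a b k : ℕ) (d : ℕ → ℕ) : Set (tupleSpace K r (k + 1) fun i => d i) :=
  {F | memPhiSpan K a b F ∧
    ¬ vdimGE r k (fun i => (F i.castSucc : MvPolynomial (Fin (r + 1)) K)) ((r : ℤ) - k + a)}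

lemma trdeg_quotient_lt_of_mem_spanLocus {F : tupleSpace K r (k + 1) fun i => d i}
    (hF : F ∈ spanLocus K r a b k d) {m : ℕ} (hm : (m : ℤ) = r - (k + 1 : ℕ) + a)
    {Q : Ideal (MvPolynomial (Fin (r + 1)) K)} [Q.IsPrime]
    (hQ : ∀ j : Fin k, (F j.castSucc : MvPolynomial (Fin (r + 1)) K) ∈ Q) :
    Algebra.trdeg K (MvPolynomial (Fin (r + 1)) K ⧸ Q) < ((m + 1 + 1 : ℕ) : Cardinal) := by
  have h := trdeg_quotient_lt_of_not_vdimGE hF.2 hQ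
  rwa [show ((r : ℤ) - k + a).toNat = m + 1 by omega] at h

lemma exists_evalIndex_eq_tuple {I : Type*} {n : ℕ} (x : I → tupleSpace K r n fun i => d i) :
    ∃ G : ℕ → MvPolynomial (Fin (r + 1)) (I → K), (∀ j, (G j).IsHomogeneous (d j)) ∧
      ∀ (j : Fin n) (i : I), evalIndex i (G j) = x i j := by
  have hform (j : ℕ) : ∃ G : MvPolynomial (Fin (r + 1)) (I → K), G.IsHomogeneous (d j) ∧
      ∀ (hj : j < n) (i : I), evalIndex i G = x i ⟨j, hj⟩ := by
    by_cases hj : j < n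
    · obtain ⟨G, hG, hGx⟩ := exists_evalIndex_eq_of_isHomogeneous fun i =>
        (mem_homogeneousSubmodule _ _).mp (x i ⟨j, hj⟩).2
      exact ⟨G, hG, fun _ => hGx⟩
    · exact ⟨0, isHomogeneous_zero _ _ _, fun h => absurd h hj⟩
  choose G hG hGx using hform
  exact ⟨G, hG, fun j => hGx j j.2⟩

lemma exists_card_add_savedParameters_le_of_isUltrapowerMap [IsAlgClosed K]
    {U : Ultrafilter (spanLocus K r a b k d)} {Ω : Type*} [Field Ω] [Algebra K Ω]
    {π : (spanLocus K r a b k d → K) →ₐ[K] Ω} (hπ : IsUltrapowerMap U π) :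
    ∃ (T : Finset Ω) (B : Finset ℕ), k ∈ B ∧ B ⊆ Finset.range (k + 1) ∧
      B.card + b = r + a ∧ (Finset.range (k + 1) \ B).card ≤ b ∧
      (∀ j m, π (fun F => coeff m (F.1 j : MvPolynomial (Fin (r + 1)) K)) ∈
        algClosureAdjoin K (T : Set Ω)) ∧
      T.card + savedParameters b d B ≤
        (r - b) * (b + 1) + ∑ j ∈ Finset.range (k + 1), (r + d j).choose (d j) := by
  have := isAlgClosed_of_surjective_pi hπ.surjective
  choose P hP hhom hFP hdim Λ hΛ hPΛ using fun F : spanLocus K r a b k d => F.2.1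
  have := hπ.isPrime_ultraIdeal hP
  obtain ⟨m, hm⟩ : ∃ m : ℕ, (m : ℤ) = r - (k + 1 : ℕ) + a :=
    ⟨_, (hdim U.neBot.nonempty.some).choose_spec.1⟩
  have htr := hπ.le_trdeg_quotient_ultraIdeal (n := m + 1) hP fun F => by
    obtain ⟨m', hm', hdim⟩ := hdim F
    obtain rfl : m' = m := by omega
    exact le_trdeg_quotient_of_le_ringKrullDim _ hdim.ge
  obtain ⟨J, A, hJA⟩ := hπ.exists_isSpanCoordinates_ultraIdeal fun F =>
    exists_isSpanCoordinates (hΛ F) (hPΛ F)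
  obtain ⟨G, hG, hGF⟩ := exists_evalIndex_eq_tuple fun F : spanLocus K r a b k d => F.1
  have hGP (j : ℕ) (hj : j < k + 1) : toUltra π (G j) ∈ ultraIdeal U π P := by
    rw [hπ.toUltra_mem_ultraIdeal_iff]
    exact .of_forall fun F => hGF ⟨j, hj⟩ F ▸ hFP F (Ideal.subset_span ⟨_, rfl⟩)
  have hlast (Q : Ideal (MvPolynomial (Fin (r + 1)) Ω)) (_ : Q.IsPrime)
      (hQP : Q ≤ ultraIdeal U π P) (hGQ : ∀ j < k, toUltra π (G j) ∈ Q) :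
      Algebra.trdeg Ω (MvPolynomial (Fin (r + 1)) Ω ⧸ Q) < ((m + 1 + 1 : ℕ) : Cardinal) :=
    hπ.trdeg_quotient_lt (F := fun j : Fin k => G j) (fun F j => (hG j).map _)
      (fun F Q _ hFQ => trdeg_quotient_lt_of_mem_spanLocus F.2 hm fun j =>
        hGF j.castSucc F ▸ hFQ j)
      (fun f hf => hπ.eval_zero_eq_zero_of_mem_ultraIdeal
        (fun F _ => eval_zero_eq_zero_of_mem (hhom F) (hP F).ne_top) (hQP hf)) fun j => hGQ j j.2
  obtain ⟨T, B, hkB, hB, hcard, hcoeff, hle⟩ := hJA.exists_card_add_savedParameters_le K htr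
    (F := fun j => toUltra π (G j)) (fun j _ => (hG j).map _) hGP hlast
  have hsdiff := Finset.card_sdiff_add_card_eq_card hB
  rw [Finset.card_range] at hsdiff
  refine ⟨T, B, hkB, hB, by omega, by omega, fun j n => ?_, hle⟩
  simpa only [coeff_toUltra, ← hGF, coeff_evalIndex] using hcoeff j j.2 n

lemma exists_length_add_savedParameters_le [IsAlgClosed K]
    (c : LTSeries (TopologicalSpace.IrreducibleCloseds (closure (spanLocus K r a b k d)))) :
    ∃ B : Finset ℕ, k ∈ B ∧ B ⊆ Finset.range (k + 1) ∧
      B.card + b = r + a ∧ (Finset.range (k + 1) \ B).card ≤ b ∧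
      c.length + savedParameters b d B ≤
        (r - b) * (b + 1) + ∑ j ∈ Finset.range (k + 1), (r + d j).choose (d j) := by
  obtain ⟨U, hU⟩ := exists_ultrafilter_length_le_card isClosed_iff_mem_zariskiCloseds c
  obtain ⟨Ω, _, _, π, hπ⟩ := exists_isUltrapowerMap K U
  obtain ⟨T, B, hkB, hB, hcard, hsdiff, hcoeff, hle⟩ :=
    exists_card_add_savedParameters_le_of_isUltrapowerMap hπ
  have hlength := hU hπ T fun φ => linearMap_mem_of_coeff_mem π
    (algClosureAdjoin K (T : Set Ω)).toSubalgebra.toSubmodule hcoeff φ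
  exact ⟨B, hkB, hB, hcard, hsdiff, by omega⟩

end SpanLocus

section IndexSequences

lemma hpoly_eq_minHilbert {b n d : ℕ} (hn : n ≤ b) (hd : 1 ≤ d) :
    hpoly b n d = minHilbert b n d := by
  obtain ⟨e, rfl⟩ := Nat.exists_eq_add_of_le' hd
  rw [hpoly, minHilbert, show (((e + 1 : ℕ) : ℤ) + n - 1).toNat = e + n by omega,
    show (((e + 1 : ℕ) : ℤ) - 1).toNat = e by omega,
    show (((e + 1 : ℕ) : ℤ) + n).toNat = e + 1 + n by omega, Int.toNat_natCast,
    Nat.choose_symm_add, Nat.choose_symm_add]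
  push_cast [Nat.cast_sub hn]
  ring

lemma card_range_orderEmbOfFin_sdiff {B : Finset ℕ} {s : ℕ} (hs : B.card = s) (j : Fin s) :
    (Finset.range (B.orderEmbOfFin hs j) \ B).card + j = B.orderEmbOfFin hs j := by
  have hinter : Finset.range (B.orderEmbOfFin hs j) ∩ B =
      (Finset.Iio j).map (B.orderEmbOfFin hs).toEmbedding := by
    ext x
    have hx : x ∈ B ↔ ∃ i, B.orderEmbOfFin hs i = x := by
      rw [← Finset.mem_coe, ← Finset.range_orderEmbOfFin B hs, Set.mem_range]
    simp only [Finset.mem_inter, Finset.mem_range, hx, Finset.mem_map, Finset.mem_Iio,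
      RelEmbedding.coe_toEmbedding]
    constructor
    · rintro ⟨hlt, i, rfl⟩
      exact ⟨i, OrderEmbedding.lt_iff_lt _ |>.mp hlt, rfl⟩
    · rintro ⟨i, hi, rfl⟩
      exact ⟨OrderEmbedding.lt_iff_lt _ |>.mpr hi, i, rfl⟩
  have hcard := Finset.card_sdiff_add_card_inter (Finset.range (B.orderEmbOfFin hs j)) B
  rwa [hinter, Finset.card_map, Fin.card_Iio, Finset.card_range] at hcard

lemma exists_strictMono_sum_hpoly_eq {b k s : ℕ} {d : ℕ → ℕ} (hd : ∀ j ≤ k, 1 ≤ d j)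
    {B : Finset ℕ} (hkB : k ∈ B) (hB : B ⊆ Finset.range (k + 1)) (hs : B.card = s)
    (hcard : (Finset.range (k + 1) \ B).card ≤ b) :
    ∃ ι : Fin s → Fin (k + 1), StrictMono ι ∧ (∀ h : s - 1 < s, ι ⟨s - 1, h⟩ = Fin.last k) ∧
      ∑ j, hpoly b (b - (ι j : ℕ) + (j : ℕ)) (d (ι j)) = savedParameters b d B := by
  let e := B.orderEmbOfFin hs
  have he (j : Fin s) : e j < k + 1 := Finset.mem_range.mp (hB (B.orderEmbOfFin_mem hs j))
  have hsum : savedParameters b d B =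
      ∑ j, minHilbert b (b - (Finset.range (e j) \ B).card) (d (e j)) := by
    rw [savedParameters, ← Finset.sum_coe_sort, ← (B.orderIsoOfFin hs).toEquiv.sum_comp]
    rfl
  refine ⟨fun j => ⟨e j, he j⟩, fun i j h => e.strictMono h, fun h => Fin.ext ?_, ?_⟩
  · have hlast : e ⟨s - 1, h⟩ = B.max' ⟨k, hkB⟩ := Finset.orderEmbOfFin_last hs (by omega)
    exact le_antisymm (Nat.lt_succ_iff.mp (he _)) (hlast.ge.trans' (B.le_max' k hkB))
  · rw [hsum, Nat.cast_sum]
    refine Finset.sum_congr rfl fun j _ => ?_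
    have hj : (Finset.range (e j) \ B).card + j = e j := card_range_orderEmbOfFin_sdiff hs j
    have hle : (Finset.range (e j) \ B).card ≤ b := (Finset.card_le_card
      (Finset.sdiff_subset_sdiff (Finset.range_mono (he j).le) subset_rfl)).trans hcard
    refine Eq.trans ?_ (hpoly_eq_minHilbert (Nat.sub_le _ _) (hd _ (Nat.lt_succ_iff.mp (he j))))
    congr 1
    change (b : ℤ) - e j + j = _
    omega

lemma exists_strictMono_forall_le {α : Type*} [LinearOrder α] {s k : ℕ} (hs : 0 < s)
    (hsk : s ≤ k + 1) (f : (Fin s → Fin (k + 1)) → α) :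
    ∃ ι, StrictMono ι ∧ ι ⟨s - 1, by omega⟩ = Fin.last k ∧
      ∀ ι', StrictMono ι' → ι' ⟨s - 1, by omega⟩ = Fin.last k → f ι ≤ f ι' := by
  obtain ⟨ι, ⟨hι, hlast⟩, hmin⟩ := Set.exists_min_image
    {ι : Fin s → Fin (k + 1) | StrictMono ι ∧ ι ⟨s - 1, by omega⟩ = Fin.last k} f (Set.toFinite _)
    ⟨fun j => ⟨k + 1 - s + j, by omega⟩, fun i j h => Nat.add_lt_add_left h _, Fin.ext (by
      change k + 1 - s + (s - 1) = k
      omega)⟩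
  exact ⟨ι, hι, hlast, fun ι' hι' hlast' => hmin ι' ⟨hι', hlast'⟩⟩

end IndexSequences

lemma toZDim_krullDim_le {α : Type*} [Preorder α] {N : ℤ}
    (h : ∀ c : LTSeries α, (c.length : ℤ) ≤ N) :
    toZDim (Order.krullDim α) ≤ ((N : WithTop ℤ) : WithBot (WithTop ℤ)) := by
  cases isEmpty_or_nonempty α
  · rw [Order.krullDim_eq_bot]
    exact bot_le
  obtain ⟨n, rfl⟩ : ∃ n : ℕ, N = n :=
    Int.eq_ofNat_of_zero_le (by simpa using h (RelSeries.singleton _ (Classical.arbitrary α)))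
  have hdim : Order.krullDim α ≤ ((n : ℕ∞) : WithBot ℕ∞) :=
    iSup_le fun c => mod_cast h c
  exact ((Nat.mono_cast (α := ℤ)).withTop_map.withBot_map hdim :)

section Dimension

variable {K : Type*} [Field K]

theorem toZDim_dimSet_spanLocus_le [IsAlgClosed K] {r a b k : ℕ} {d : ℕ → ℕ} (ha : 1 ≤ a)
    (hbr : b ≤ r) (hd : ∀ j ≤ k, 1 ≤ d j) {N : ℤ}
    (hN : ∀ ι : Fin (r - b + a) → Fin (k + 1), StrictMono ι →
      ι ⟨r - b + a - 1, by omega⟩ = Fin.last k →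
      N ≤ ∑ j, hpoly b (b - (ι j : ℕ) + (j : ℕ)) (d (ι j))) :
    toZDim (dimSet (spanLocus K r a b k d)) ≤
      (((∑ i : Fin (k + 1), ((r + d i).choose (d i) : ℤ)) - (-((b + 1) * (r - b)) + N) : ℤ) :
        WithTop ℤ) := by
  refine toZDim_krullDim_le fun c => ?_
  obtain ⟨B, hkB, hB, hcard, hsdiff, hle⟩ := exists_length_add_savedParameters_le c
  obtain ⟨ι, hι, hlast, hsum⟩ :=
    exists_strictMono_sum_hpoly_eq (s := r - b + a) hd hkB hB (by omega) hsdiff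
  have hNι := hsum ▸ hN ι hι (hlast _)
  rw [Finset.sum_range] at hle
  zify [hbr] at hle
  linarith

end Dimension

noncomputable section Statement3

open MvPolynomial

variable (K : Type*) [Field K]

theorem statement3_general [IsAlgClosed K] (r a b k : ℕ)
    (ha : 1 ≤ a) (hbr : b ≤ r) (hk : r - b + a ≤ k)
    (d : Fin k → ℕ) (hd1 : ∀ i, 1 ≤ d i)
    (X : Set (tupleSpace K r k d))
    (hX : X = {F | memPhiSpan K a b F ∧
      ¬ vdimGE r (k - 1)
        (fun i : Fin (k - 1) =>
          (F (Fin.castLE (Nat.sub_le k 1) i) : MvPolynomial (Fin (r + 1)) K))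
        ((r : ℤ) - (k - 1 : ℕ) + a)}) :
    ∃ ι : Fin (r - b + a) → Fin k, StrictMono ι ∧
      (∀ j : Fin (r - b + a), (j : ℕ) + 1 = r - b + a → (ι j : ℕ) + 1 = k) ∧
      toZDim (dimSet X) ≤
        ((((∑ i : Fin k, ((r + d i).choose (d i) : ℤ)) -
          (-(((b : ℤ) + 1) * ((r : ℤ) - (b : ℤ))) +
            ∑ j : Fin (r - b + a),
              hpoly (b : ℤ) ((b : ℤ) - ((ι j : ℕ) : ℤ) + ((j : ℕ) : ℤ)) (d (ι j))) :
          ℤ) : WithTop ℤ) : WithBot (WithTop ℤ)) := by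
  obtain ⟨k, rfl⟩ := Nat.exists_eq_add_of_le' (show 1 ≤ k by omega)
  obtain ⟨d, rfl⟩ : ∃ d' : ℕ → ℕ, d = fun i : Fin (k + 1) => d' i :=
    ⟨fun j => if h : j < k + 1 then d ⟨j, h⟩ else 0, _root_.funext fun i => by
      simp only [i.isLt, dite_true, Fin.eta]⟩
  obtain rfl : X = spanLocus K r a b k d := hX
  obtain ⟨ι, hι, hlast, hmin⟩ := exists_strictMono_forall_le (by omega) hk
    fun ι : Fin (r - b + a) → Fin (k + 1) =>
      ∑ j, hpoly b (b - (ι j : ℕ) + (j : ℕ)) (d (ι j))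
  refine ⟨ι, hι, fun j hj => ?_,
    toZDim_dimSet_spanLocus_le ha hbr (fun j hj => hd1 ⟨j, Nat.lt_succ_of_le hj⟩) hmin⟩
  rw [show j = ⟨r - b + a - 1, by omega⟩ from Fin.ext (Nat.eq_sub_of_add_eq hj), hlast,
    Fin.val_last]

/-- Lemma `technical`. Let `1 ≤ b ≤ r`, `a ≥ 1`, `k ≥ r - b + a`, and let
`d_1 ≤ ⋯ ≤ d_k` be positive degrees. Then the codimension of
`Φ^{ℙ^r,a}_{d_1,…,d_k}(ℙ^r, Span(r,b)) \ (Φ^{ℙ^r,a}_{d_1,…,d_{k-1}}(ℙ^r) × W_{r,d_k})`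
in `W_{r,d_1} × ⋯ × W_{r,d_k}` is at least
`-(b+1)(r-b) + min { Σ_j h_{b, b-i_j+j}(d_{i_j}) : 1 ≤ i_1 < ⋯ < i_{r-b+a} = k }`;
equivalently (since the minimum is attained), there is a strictly increasing sequence of
indices `ι` ending at the last index (written 0-indexed, so that `b - i_j + j` becomes
`b - ι j + j`) for which the dimension of the locus is at most the ambient dimension
`N = Σ C(r + d_i, d_i)` minus the corresponding bound. -/
theorem statement3 [IsAlgClosed K] (r a b k : ℕ)
    (hr : 1 ≤ r) (ha : 1 ≤ a) (hb1 : 1 ≤ b) (hbr : b ≤ r) (hk1 : 1 ≤ k)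
    (hk : r - b + a ≤ k)
    (d : Fin k → ℕ) (hd1 : ∀ i, 1 ≤ d i) (hmono : Monotone d)
    (X : Set (tupleSpace K r k d))
    (hX : X = {F | memPhiSpan K a b F ∧
      ¬ vdimGE r (k - 1)
        (fun i : Fin (k - 1) =>
          (F (Fin.castLE (Nat.sub_le k 1) i) : MvPolynomial (Fin (r + 1)) K))
        ((r : ℤ) - (k - 1 : ℕ) + a)}) :
    ∃ ι : Fin (r - b + a) → Fin k, StrictMono ι ∧
      ι ⟨r - b + a - 1, by omega⟩ = ⟨k - 1, by omega⟩ ∧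
      toZDim (dimSet X) ≤
        ((((∑ i : Fin k, ((r + d i).choose (d i) : ℤ)) -
          (-(((b : ℤ) + 1) * ((r : ℤ) - (b : ℤ))) +
            ∑ j : Fin (r - b + a),
              hpoly (b : ℤ) ((b : ℤ) - ((ι j : ℕ) : ℤ) + ((j : ℕ) : ℤ)) (d (ι j))) :
          ℤ) : WithTop ℤ) : WithBot (WithTop ℤ)) := by
  obtain ⟨ι, hι, hlast, hdim⟩ := statement3_general K r a b k ha hbr hk d hd1 X hX
  exact ⟨ι, hι, Fin.ext (Nat.eq_sub_of_add_eq (hlast _ (Nat.sub_add_cancel (by omega)))), hdim⟩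

end Statement3
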